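/- (Schneider) Let Ω be a lattice in ℂ with Weierstrass function ℘, invariants g₂, g₃, and field of endomorphisms k. Let α and p be complex numbers such that α ∉ k, p ∉ Ω and αp ∉ Ω. Then at least one of the five numbers α, g₂, g₃, ℘(p), ℘(αp) is transcendental over ℚ. -/

import Mathlib

/-!
Schneider's method. Suppose that `α`, `g₂`, `g₃`, `℘(p)`, `℘(αp)` are all algebraic. By the
differential equation `℘'² = 4℘³ - g₂℘ - g₃` so are `℘'(p)` and `℘'(αp)`, and all of these but `g₃`
generate a number field `K`, of degree `d`, say. By the addition theorem (`Schneider.wp_add`,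
`Schneider.Rat.nsmul`) the functions `℘(z)`, `℘(αz)` and their first derivatives take values in `K`
at every multiple of `p` at which both are holomorphic; let `W` be a set of `M = 12 d + 6` such
multiples. By `℘'' = 6℘² - g₂/2`, all higher derivatives have values in `K` at `W` too, with
denominators and conjugates of the expected size (`Schneider.Jet`, `Schneider.exists_jets`).

For a large parameter `t` put `n = 2Mt` and `T = nt`. Siegel's lemma provides a nonzero polynomial
of degree less than `n` in each variable, with integral coefficients of size `exp (T log T + O(T))`
in `K`, such that `F(z) = ∑ x_{ij} ℘(z)^i ℘(αz)^j` vanishes to order at least `T` at all points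
of `W`. Since `α` is not in `k`, the functions `℘(z)` and `℘(αz)` are algebraically independent
(`Schneider.exists_ne_zero`), so `F ≠ 0`, and there is a least `s ≥ T` such that `F^(s)(w₀) ≠ 0`
for some `w₀ ∈ W` (`Schneider.exists_auxiliary`).

The function `℘` is a quotient of entire functions of order at most `3`, by the product defining
`σ`. The true order is `2`, but the cruder bound suffices. Multiplying `F` by a suitable
denominator gives an entire function, which is divisible by `∏_{w ∈ W} (z - w)^s`. The maximum
modulus principle on a disc of radius proportional to `s^{1/6}` bounds `|F^(s)(w₀)|` by
`exp ((2 - M/6) s log s + O(s))` (`Schneider.extrapolation`). On the other hand, `F^(s)(w₀)` times a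
denominator of size `exp (O(s))` is a nonzero integer of `K` whose conjugates are at most
`exp (2 s log s + O(s))`, so `|F^(s)(w₀)|` is at least `exp (-2 (d - 1) s log s - O(s))`
(`Schneider.liouville`). As `M / 6 = 2 d + 1`, this is impossible for large `s`
(`Schneider.core`).

The function `℘` of the statement, defined through the logarithmic derivative of `σ`, is identified
with `PeriodPair.weierstrassP` in `Schneider.wP_eq`.
-/

open Complex

noncomputable section

/-- The lattice `ℤω₁ + ℤω₂`, as a set of complex numbers. -/
def LatticePts (ω₁ ω₂ : ℂ) : Set ℂ := {z | ∃ m n : ℤ, z = m * ω₁ + n * ω₂}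

/-- `ω₁, ω₂` are the basis of a lattice: they are `ℝ`-linearly independent. -/
def IsLatticeBasis (ω₁ ω₂ : ℂ) : Prop := LinearIndependent ℝ ![ω₁, ω₂]

/-- The nonzero lattice points. -/
def LatticePts' (ω₁ ω₂ : ℂ) : Set ℂ := {w | w ∈ LatticePts ω₁ ω₂ ∧ w ≠ 0}

/-- The Weierstrass sigma function of the lattice `ℤω₁ + ℤω₂`:
`σ(z) = z ∏_{ω ∈ Ω∖{0}} (1 − z/ω) exp(z/ω + z²/(2ω²))`. -/
def wSigma (ω₁ ω₂ : ℂ) (z : ℂ) : ℂ :=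
  z * ∏' w : LatticePts' ω₁ ω₂,
    (1 - z / (w : ℂ)) * Complex.exp (z / w + z ^ 2 / (2 * (w : ℂ) ^ 2))

/-- The Weierstrass zeta function `ζ = σ'/σ`. -/
def wZeta (ω₁ ω₂ : ℂ) (z : ℂ) : ℂ := deriv (wSigma ω₁ ω₂) z / wSigma ω₁ ω₂ z

/-- The Weierstrass elliptic function `℘ = -ζ'`. -/
def wP (ω₁ ω₂ : ℂ) (z : ℂ) : ℂ := - deriv (wZeta ω₁ ω₂) z

/-- The invariant `g₂ = 60 Σ_{ω ∈ Ω∖{0}} ω⁻⁴` of the lattice. -/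
def g2 (ω₁ ω₂ : ℂ) : ℂ := 60 * ∑' w : LatticePts' ω₁ ω₂, ((w : ℂ) ^ 4)⁻¹

/-- The invariant `g₃ = 140 Σ_{ω ∈ Ω∖{0}} ω⁻⁶` of the lattice. -/
def g3 (ω₁ ω₂ : ℂ) : ℂ := 140 * ∑' w : LatticePts' ω₁ ω₂, ((w : ℂ) ^ 6)⁻¹

/-- The quasi-period `η(ω) = ζ(z + ω) − ζ(z)` (independent of `z`; we evaluate at the
point `(ω₁+ω₂)/3`, which is never a pole of `ζ`, nor is its translate by a lattice point). -/
def wEta (ω₁ ω₂ : ℂ) (ω : ℂ) : ℂ :=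
  wZeta ω₁ ω₂ ((ω₁ + ω₂) / 3 + ω) - wZeta ω₁ ω₂ ((ω₁ + ω₂) / 3)

/-- The field of endomorphisms `k = {α ∈ ℂ : αΩ ⊆ Ω} ⊗_ℤ ℚ`, as a set of complex numbers:
the `α ∈ ℂ` such that `mα` stabilizes the lattice for some nonzero integer `m`. -/
def endQ (ω₁ ω₂ : ℂ) : Set ℂ :=
  {α | ∃ m : ℤ, m ≠ 0 ∧ ∀ w ∈ LatticePts ω₁ ω₂, (m : ℂ) * α * w ∈ LatticePts ω₁ ω₂}

/-- The transcendence degree over `ℚ` of the subfield `ℚ(S)` of `ℂ` generated by `S` is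
at least `d`: there are `d` algebraically independent elements in `ℚ(S)`. -/
def trdegGe (S : Set ℂ) (d : ℕ) : Prop :=
  ∃ x : Fin d → ℂ, (∀ i, x i ∈ IntermediateField.adjoin ℚ S) ∧ AlgebraicIndependent ℚ x

namespace Schneider
open Filter Topology PeriodPair

/-! ### The elliptic function `℘`: differential equations and addition theorem -/

section Elliptic
variable (L : PeriodPair)

lemma countable_lattice : (L.lattice : Set ℂ).Countable := by
  have : Countable L.lattice := Function.Injective.countable (L.latticeEquivProd.injective)
  exact Set.countable_coe_iff.mp this

/-- The analytic continuation arguments take place on complements of countable sets, which are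
connected. -/
lemma isPreconnected_compl_of_countable {s : Set ℂ} (hs : s.Countable) : IsPreconnected sᶜ :=
  (hs.isConnected_compl_of_one_lt_rank (by rw [Complex.rank_real_complex]; norm_num)).isPreconnected

lemma analyticAt_wp {z : ℂ} (hz : z ∉ L.lattice) : AnalyticAt ℂ L.weierstrassP z :=
  L.analyticOnNhd_weierstrassP z hz

lemma analyticAt_wp' {z : ℂ} (hz : z ∉ L.lattice) : AnalyticAt ℂ L.derivWeierstrassP z :=
  L.analyticOnNhd_derivWeierstrassP z hz

lemma hasDerivAt_wp {z : ℂ} (hz : z ∉ L.lattice) :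
    HasDerivAt L.weierstrassP (L.derivWeierstrassP z) z := by
  simpa using (analyticAt_wp L hz).differentiableAt.hasDerivAt

lemma eventually_notMem {z : ℂ} (hz : z ∉ L.lattice) : ∀ᶠ w in 𝓝 z, w ∉ L.lattice :=
  L.isClosed_lattice.isOpen_compl.mem_nhds hz

lemma tendsto_wp_zero : Tendsto L.weierstrassP (𝓝[≠] 0) (Bornology.cobounded ℂ) := by
  apply tendsto_cobounded_of_meromorphicOrderAt_neg
  rw [L.order_weierstrassP 0 (zero_mem _)]
  decide

lemma eventually_notMem_zero : ∀ᶠ z in 𝓝[≠] (0:ℂ), z ∉ L.lattice := by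
  filter_upwards [mem_nhdsWithin_of_mem_nhds (L.compl_lattice_sdiff_singleton_mem_nhds 0),
    self_mem_nhdsWithin] with z hz hz0
  simp_all

/-- `℘` is not locally constant, hence `℘'` does not vanish near any point off the lattice. -/
lemma eventually_wp'_ne_zero {z : ℂ} (hz : z ∉ L.lattice) :
    ∀ᶠ w in 𝓝[≠] z, L.derivWeierstrassP w ≠ 0 := by
  have hpre := isPreconnected_compl_of_countable (countable_lattice L)
  rcases (analyticAt_wp' L hz).eventually_eq_zero_or_eventually_ne_zero with h | h
  · exfalso
    have h0 : Set.EqOn L.derivWeierstrassP 0 (L.lattice : Set ℂ)ᶜ :=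
      L.analyticOnNhd_derivWeierstrassP.eqOn_zero_of_preconnected_of_eventuallyEq_zero
        hpre hz h
    -- then `℘` is constant off the lattice, contradicting the pole at `0`
    have hc : ∀ w ∉ L.lattice, L.weierstrassP w = L.weierstrassP z := fun w hw ↦
      L.isClosed_lattice.isOpen_compl.is_const_of_deriv_eq_zero hpre
        L.differentiableOn_weierstrassP (by simpa using h0) hw hz
    have h1 : Tendsto L.weierstrassP (𝓝[≠] 0) (𝓝 (L.weierstrassP z)) := by
      refine tendsto_const_nhds.congr' ?_
      filter_upwards [eventually_notMem_zero L] with w hw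
      exact (hc w hw).symm
    exact not_tendsto_nhds_of_tendsto_atTop
      (tendsto_norm_cobounded_atTop.comp (tendsto_wp_zero L)) _ h1.norm
  · exact h

/-- The second order differential equation `℘'' = 6 ℘² - g₂ / 2`. -/
lemma hasDerivAt_wp' {z : ℂ} (hz : z ∉ L.lattice) :
    HasDerivAt L.derivWeierstrassP (6 * L.weierstrassP z ^ 2 - L.g₂ / 2) z := by
  have key : ∀ w ∉ L.lattice, L.derivWeierstrassP w ≠ 0 →
      deriv L.derivWeierstrassP w = 6 * L.weierstrassP w ^ 2 - L.g₂ / 2 := by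
    intro w hw hw'
    have h1 := ((analyticAt_wp' L hw).differentiableAt.hasDerivAt).pow 2
    have h2 : HasDerivAt (fun w ↦ 4 * L.weierstrassP w ^ 3 - L.g₂ * L.weierstrassP w - L.g₃)
      (4 * (3 * L.weierstrassP w ^ 2 * L.derivWeierstrassP w) - L.g₂ * L.derivWeierstrassP w) w := by
      simpa using ((((hasDerivAt_wp L hw).pow 3).const_mul 4).sub
        ((hasDerivAt_wp L hw).const_mul L.g₂)).sub_const L.g₃
    have h3 : (L.derivWeierstrassP ^ 2) =ᶠ[𝓝 w]
        (fun w ↦ 4 * L.weierstrassP w ^ 3 - L.g₂ * L.weierstrassP w - L.g₃) := by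
      filter_upwards [eventually_notMem L hw] with x hx using L.derivWeierstrassP_sq x hx
    have h4 := h1.unique (h2.congr_of_eventuallyEq h3)
    apply mul_left_cancel₀ (mul_ne_zero two_ne_zero hw')
    simp at h4
    linear_combination h4
  have hd := (analyticAt_wp' L hz).differentiableAt.hasDerivAt
  suffices deriv L.derivWeierstrassP z = 6 * L.weierstrassP z ^ 2 - L.g₂ / 2 from this ▸ hd
  have hev : ∀ᶠ w in 𝓝[≠] z,
      deriv L.derivWeierstrassP w = 6 * L.weierstrassP w ^ 2 - L.g₂ / 2 := by
    filter_upwards [eventually_wp'_ne_zero L hz,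
      mem_nhdsWithin_of_mem_nhds (eventually_notMem L hz)] with w h1 h2 using key w h2 h1
  have c1 : Tendsto (deriv L.derivWeierstrassP) (𝓝[≠] z) (𝓝 (deriv L.derivWeierstrassP z)) :=
    (analyticAt_wp' L hz).deriv.continuousAt.continuousWithinAt
  have c2 : Tendsto (fun w ↦ 6 * L.weierstrassP w ^ 2 - L.g₂ / 2) (𝓝[≠] z)
      (𝓝 (6 * L.weierstrassP z ^ 2 - L.g₂ / 2)) := by
    have := (analyticAt_wp L hz).continuousAt
    exact ContinuousAt.continuousWithinAt (f := fun w ↦ 6 * L.weierstrassP w ^ 2 - L.g₂ / 2)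
      (by fun_prop)
  exact tendsto_nhds_unique c1 (c2.congr' (hev.mono fun w hw ↦ hw.symm))

/-- A point is determined modulo the lattice by the values of `℘` and `℘'`. If these agree at `u`
and `v`, then `H(z) = ℘(z + u - v) - ℘(z)` solves a linear second order equation with zero initial
data at `v`, so `H = 0` and `u - v` is a pole of `℘`, like `0`. -/
lemma sub_mem_of_wp_eq_of_wp'_eq {u v : ℂ} (hu : u ∉ L.lattice) (hv : v ∉ L.lattice)
    (h : L.weierstrassP u = L.weierstrassP v)
    (h' : L.derivWeierstrassP u = L.derivWeierstrassP v) : u - v ∈ L.lattice := by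
  set d := u - v with hd
  set H : ℂ → ℂ := fun z ↦ L.weierstrassP (z + d) - L.weierstrassP z with hH
  have an : ∀ z, z ∉ L.lattice → z + d ∉ L.lattice → AnalyticAt ℂ H z := fun z hz hzd ↦ by
    have h1 : AnalyticAt ℂ (fun z ↦ L.weierstrassP (z + d)) z :=
      (analyticAt_wp L hzd).comp (f := fun z ↦ z + d) (by fun_prop)
    exact h1.sub (analyticAt_wp L hz)
  have hvd : v + d = u := by simp [d]
  have aH := an v hv (by rwa [hvd])
  have ev1 : ∀ᶠ z in 𝓝 v, z ∉ L.lattice ∧ z + d ∉ L.lattice := by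
    refine (eventually_notMem L hv).and ?_
    have : Tendsto (fun z ↦ z + d) (𝓝 v) (𝓝 u) := by
      rw [← hvd]; exact (continuous_add_const d).tendsto v
    exact this.eventually (eventually_notMem L hu)
  have d1 : ∀ z, z ∉ L.lattice → z + d ∉ L.lattice →
      HasDerivAt H (L.derivWeierstrassP (z + d) - L.derivWeierstrassP z) z := fun z hz hzd ↦
    ((hasDerivAt_wp L hzd).comp_add_const z d).sub (hasDerivAt_wp L hz)
  have e1 : deriv H =ᶠ[𝓝 v] fun z ↦ L.derivWeierstrassP (z + d) - L.derivWeierstrassP z := by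
    filter_upwards [ev1] with z hz using (d1 z hz.1 hz.2).deriv
  have e2 : deriv (deriv H) =ᶠ[𝓝 v]
      (fun z ↦ 6 * (L.weierstrassP (z + d) + L.weierstrassP z)) * H := by
    have := e1.eventuallyEq_nhds.mono fun z hz ↦ hz.deriv_eq
    filter_upwards [this, ev1] with z hz hz'
    have h2 : HasDerivAt (fun z ↦ L.derivWeierstrassP (z + d) - L.derivWeierstrassP z) _ z :=
      ((hasDerivAt_wp' L hz'.2).comp_add_const z d).sub (hasDerivAt_wp' L hz'.1)
    rw [hz, h2.deriv]
    simp only [hH, Pi.mul_apply]; ring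
  have hH0 : H v = 0 := by simp [hH, hvd, h]
  have hH1 : deriv H v = 0 := by rw [e1.eq_of_nhds]; simp [hvd, h']
  have o1 : analyticOrderAt (deriv H) v + 1 = analyticOrderAt H v := by
    simpa [hH0] using aH.analyticOrderAt_deriv_add_one
  have o2 : analyticOrderAt (deriv (deriv H)) v + 1 = analyticOrderAt (deriv H) v := by
    simpa [hH1] using aH.deriv.analyticOrderAt_deriv_add_one
  have aS : AnalyticAt ℂ (fun z ↦ 6 * (L.weierstrassP (z + d) + L.weierstrassP z)) v := by
    have h1 : AnalyticAt ℂ (fun z ↦ L.weierstrassP (z + d)) v :=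
      (analyticAt_wp L (hvd ▸ hu)).comp (f := fun z ↦ z + d) (by fun_prop)
    have h2 := analyticAt_wp L hv
    fun_prop
  have o3 : analyticOrderAt H v ≤ analyticOrderAt (deriv (deriv H)) v := by
    rw [analyticOrderAt_congr e2, analyticOrderAt_mul aS aH]
    exact le_add_self
  -- differentiating twice lowers a finite order of vanishing by `2`, but `H` divides its second
  -- derivative
  have otop : analyticOrderAt H v = ⊤ := by
    by_contra hne
    rw [← o2] at o1
    rw [← o1] at o3 hne
    generalize analyticOrderAt (deriv (deriv H)) v = m at *
    cases m with
    | top => simp at hne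
    | coe m =>
      have : (m + 1 + 1 : ℕ) ≤ m := by exact_mod_cast o3
      omega
  -- `H` vanishes identically where it is analytic
  have hpre : IsPreconnected ((L.lattice : Set ℂ) ∪ (fun z ↦ z - d) '' L.lattice)ᶜ :=
    isPreconnected_compl_of_countable ((countable_lattice L).union ((countable_lattice L).image _))
  have hmem : ∀ z, z ∈ ((L.lattice : Set ℂ) ∪ (fun z ↦ z - d) '' L.lattice)ᶜ ↔
      z ∉ L.lattice ∧ z + d ∉ L.lattice := by
    intro z
    simp only [Set.mem_compl_iff, Set.mem_union, not_or, Set.mem_image, SetLike.mem_coe, not_exists,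
      not_and]
    refine and_congr_right fun _ ↦ ⟨fun hz hzd ↦ hz _ hzd (by simp), fun hz x hx hxz ↦ hz ?_⟩
    rw [← hxz]; simpa using hx
  have hz := AnalyticOnNhd.eqOn_zero_of_preconnected_of_eventuallyEq_zero
    (f := H) (fun z hz ↦ an z ((hmem z).1 hz).1 ((hmem z).1 hz).2) hpre
    ((hmem v).2 ⟨hv, hvd ▸ hu⟩) (analyticOrderAt_eq_top.1 otop)
  -- otherwise `℘(z) = ℘(z + d)` would stay bounded as `z → 0`
  by_contra hdn
  have t1 : Tendsto (fun z ↦ L.weierstrassP (z + d)) (𝓝[≠] 0) (𝓝 (L.weierstrassP d)) := by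
    have h1 : Tendsto (fun z ↦ z + d) (𝓝 0) (𝓝 d) := by
      simpa using (continuous_add_const d).tendsto 0
    exact ((analyticAt_wp L hdn).continuousAt.tendsto.comp h1).mono_left nhdsWithin_le_nhds
  have t2 : Tendsto L.weierstrassP (𝓝[≠] 0) (𝓝 (L.weierstrassP d)) := by
    refine t1.congr' ?_
    have hev : ∀ᶠ z in 𝓝[≠] (0:ℂ), z + d ∉ L.lattice := by
      have : Tendsto (fun z ↦ z + d) (𝓝 0) (𝓝 d) := by
        simpa using (continuous_add_const d).tendsto 0
      exact mem_nhdsWithin_of_mem_nhds (this.eventually (eventually_notMem L hdn))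
    filter_upwards [eventually_notMem_zero L, hev] with z h1 h2
    have := hz ((hmem z).2 ⟨h1, h2⟩)
    simpa [hH, sub_eq_zero] using this
  exact not_tendsto_nhds_of_tendsto_atTop
    (tendsto_norm_cobounded_atTop.comp (tendsto_wp_zero L)) _ t2.norm

/-- `℘' / ℘² → 0` at the origin, by the differential equation. -/
lemma tendsto_wp'_div : Tendsto (fun z ↦ L.derivWeierstrassP z / L.weierstrassP z ^ 2)
    (𝓝[≠] 0) (𝓝 0) := by
  have hinv : Tendsto (fun z ↦ (L.weierstrassP z)⁻¹) (𝓝[≠] 0) (𝓝 0) :=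
    tendsto_inv₀_cobounded.comp (tendsto_wp_zero L)
  have h2 : Tendsto (fun z ↦ 4 * (L.weierstrassP z)⁻¹ - L.g₂ * (L.weierstrassP z)⁻¹ ^ 3
      - L.g₃ * (L.weierstrassP z)⁻¹ ^ 4) (𝓝[≠] 0) (𝓝 0) := by
    simpa using ((hinv.const_mul 4).sub ((hinv.pow 3).const_mul L.g₂)).sub
      ((hinv.pow 4).const_mul L.g₃)
  have hne : ∀ᶠ z in 𝓝[≠] (0:ℂ), L.weierstrassP z ≠ 0 := by
    have := (tendsto_wp_zero L).eventually
      (Bornology.isBounded_singleton (x := (0:ℂ)))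
    exact this
  have h3 : Tendsto (fun z ↦ (L.derivWeierstrassP z / L.weierstrassP z ^ 2) ^ 2)
      (𝓝[≠] 0) (𝓝 0) := by
    refine h2.congr' ?_
    filter_upwards [eventually_notMem_zero L, hne] with z hz hz0
    rw [div_pow, L.derivWeierstrassP_sq z hz]
    field_simp
  rw [tendsto_zero_iff_norm_tendsto_zero] at h3 ⊢
  have := h3.sqrt
  simp only [norm_pow, Real.sqrt_zero] at this
  exact this.congr fun z ↦ Real.sqrt_sq (norm_nonneg _)

/-- The addition theorem for `℘`, with denominators cleared. With `u + v = c` fixed,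
solving for the last `℘` gives a function `N / D²` of `u` whose derivative vanishes by the
differential equations, and whose limit as `u → 0` is `℘(c)`. -/
lemma wp_add {u v : ℂ} (hu : u ∉ L.lattice) (hv : v ∉ L.lattice) (huv : u + v ∉ L.lattice) :
    (L.derivWeierstrassP u - L.derivWeierstrassP v) ^ 2 / 4 =
      (L.weierstrassP u - L.weierstrassP v) ^ 2 *
        (L.weierstrassP u + L.weierstrassP v + L.weierstrassP (u + v)) := by
  set c := u + v with hc
  set D : ℂ → ℂ := fun z ↦ L.weierstrassP z - L.weierstrassP (c - z) with hD
  set N : ℂ → ℂ := fun z ↦ (L.derivWeierstrassP z - L.derivWeierstrassP (c - z)) ^ 2 / 4 -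
    D z ^ 2 * (L.weierstrassP z + L.weierstrassP (c - z)) with hN
  have hcz : Tendsto (fun z ↦ c - z) (𝓝[≠] 0) (𝓝 c) := by
    have : Tendsto (fun z ↦ c - z) (𝓝 0) (𝓝 (c - 0)) := by
      apply Continuous.tendsto; fun_prop
    rw [sub_zero] at this
    exact this.mono_left nhdsWithin_le_nhds
  have ev2 : ∀ᶠ z in 𝓝[≠] (0:ℂ), c - z ∉ L.lattice :=
    hcz.eventually (eventually_notMem L huv)
  have tb : Tendsto (fun z ↦ L.weierstrassP (c - z)) (𝓝[≠] 0) (𝓝 (L.weierstrassP c)) :=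
    (analyticAt_wp L huv).continuousAt.tendsto.comp hcz
  have tb' : Tendsto (fun z ↦ L.derivWeierstrassP (c - z)) (𝓝[≠] 0)
      (𝓝 (L.derivWeierstrassP c)) :=
    (analyticAt_wp' L huv).continuousAt.tendsto.comp hcz
  have hinv : Tendsto (fun z ↦ (L.weierstrassP z)⁻¹) (𝓝[≠] 0) (𝓝 0) :=
    tendsto_inv₀_cobounded.comp (tendsto_wp_zero L)
  have hne : ∀ᶠ z in 𝓝[≠] (0:ℂ), L.weierstrassP z ≠ 0 :=
    (tendsto_wp_zero L).eventually (Bornology.isBounded_singleton (x := (0:ℂ)))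
  -- asymptotics at the origin
  have tD : Tendsto (fun z ↦ D z ^ 2 / L.weierstrassP z ^ 2) (𝓝[≠] 0) (𝓝 1) := by
    have h1 : Tendsto (fun z ↦ (1 - L.weierstrassP (c - z) * (L.weierstrassP z)⁻¹) ^ 2)
        (𝓝[≠] 0) (𝓝 1) := by
      simpa using ((tendsto_const_nhds (x := (1:ℂ))).sub (tb.mul hinv)).pow 2
    refine h1.congr' ?_
    filter_upwards [hne] with z hz
    simp only [hD]; field_simp
  have tN : Tendsto (fun z ↦ N z / L.weierstrassP z ^ 2) (𝓝[≠] 0) (𝓝 (L.weierstrassP c)) := by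
    have h1 : Tendsto (fun z ↦ L.weierstrassP (c - z)
        + (L.weierstrassP (c - z) ^ 2 - L.g₂ / 4) * (L.weierstrassP z)⁻¹
        + (L.derivWeierstrassP (c - z) ^ 2 / 4 - L.weierstrassP (c - z) ^ 3 - L.g₃ / 4) *
          (L.weierstrassP z)⁻¹ ^ 2
        - (L.derivWeierstrassP z / L.weierstrassP z ^ 2) * L.derivWeierstrassP (c - z) / 2)
        (𝓝[≠] 0) (𝓝 (L.weierstrassP c + (L.weierstrassP c ^ 2 - L.g₂ / 4) * 0 +
          (L.derivWeierstrassP c ^ 2 / 4 - L.weierstrassP c ^ 3 - L.g₃ / 4) * 0 ^ 2 -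
          0 * L.derivWeierstrassP c / 2)) :=
      ((tb.add (((tb.pow 2).sub_const _).mul hinv)).add
        (((((tb'.pow 2).div_const 4).sub (tb.pow 3)).sub_const _).mul (hinv.pow 2))).sub
        (((tendsto_wp'_div L).mul tb').div_const 2)
    simp only [mul_zero, ne_eq, OfNat.ofNat_ne_zero, not_false_eq_true, zero_pow, add_zero,
      zero_mul, zero_div, sub_zero] at h1
    refine h1.congr' ?_
    filter_upwards [hne, eventually_notMem_zero L] with z hz hzL
    have e := L.derivWeierstrassP_sq z hzL
    simp only [hN, hD]; field_simp
    linear_combination (-2) * e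
  -- the quotient `N / D²` is constant on a small half disc at the origin
  have hDne : ∀ᶠ z in 𝓝[≠] (0:ℂ), D z ≠ 0 := by
    filter_upwards [tD.eventually_ne one_ne_zero] with z hz h0
    simp [h0] at hz
  obtain ⟨ε, hε, hball⟩ := Metric.mem_nhdsWithin_iff.1
    (((eventually_notMem_zero L).and ev2).and hDne)
  set V : Set ℂ := Metric.ball 0 ε ∩ {z | 0 < z.re} with hV
  have hVo : IsOpen V := Metric.isOpen_ball.inter (isOpen_lt continuous_const continuous_re)
  have hVc : IsPreconnected V :=
    ((convex_ball 0 ε).inter (convex_halfSpace_re_gt 0)).isPreconnected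
  have hVs : ∀ z ∈ V, (z ∉ L.lattice ∧ c - z ∉ L.lattice) ∧ D z ≠ 0 := fun z hz ↦
    hball ⟨hz.1, by rintro rfl; simpa using hz.2⟩
  have hdD : ∀ z, z ∉ L.lattice → c - z ∉ L.lattice →
      HasDerivAt D (L.derivWeierstrassP z + L.derivWeierstrassP (c - z)) z := fun z h1 h2 ↦ by
    have := (hasDerivAt_wp L h1).sub ((hasDerivAt_wp L h2).comp_const_sub c z)
    exact HasDerivAt.congr_deriv (f := D) this (by ring)
  have hdN : ∀ z, z ∉ L.lattice → c - z ∉ L.lattice → D z ≠ 0 →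
      HasDerivAt (fun z ↦ N z / D z ^ 2) 0 z := fun z h1 h2 h3 ↦ by
    have a1 := ((hasDerivAt_wp' L h1).sub ((hasDerivAt_wp' L h2).comp_const_sub c z)).pow 2
    have a2 := (hasDerivAt_wp L h1).add ((hasDerivAt_wp L h2).comp_const_sub c z)
    have a3 := (((a1.div_const 4).sub (((hdD z h1 h2).pow 2).mul a2)).div ((hdD z h1 h2).pow 2)
      (by simpa using h3))
    refine HasDerivAt.congr_deriv (f := fun z ↦ N z / D z ^ 2) a3 ?_
    have e1 := L.derivWeierstrassP_sq z h1
    have e2 := L.derivWeierstrassP_sq (c - z) h2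
    rw [div_eq_zero_iff]
    left
    simp only [Pi.sub_apply, Pi.pow_apply, Pi.add_apply, Pi.mul_apply]
    simp only [hD]
    generalize L.weierstrassP z = a at *
    generalize L.weierstrassP (c - z) = b at *
    generalize L.derivWeierstrassP z = a' at *
    generalize L.derivWeierstrassP (c - z) = b' at *
    push_cast
    linear_combination (-(a' - b') * (a - b) / 2) * (e1 - e2)
  have hconst : ∃ k, ∀ z ∈ V, N z / D z ^ 2 = k := by
    refine hVo.exists_is_const_of_deriv_eq_zero hVc (fun z hz ↦ ?_) fun z hz ↦ ?_
    · exact (hdN z (hVs z hz).1.1 (hVs z hz).1.2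
        (hVs z hz).2).differentiableAt.differentiableWithinAt
    · exact (hdN z (hVs z hz).1.1 (hVs z hz).1.2 (hVs z hz).2).deriv
  obtain ⟨k, hk⟩ := hconst
  have hle : 𝓝[V] (0:ℂ) ≤ 𝓝[≠] 0 := nhdsWithin_mono _ fun z hz ↦ by
    rintro rfl; simpa using hz.2
  have hnb : (𝓝[V] (0:ℂ)).NeBot := by
    rw [← mem_closure_iff_nhdsWithin_neBot, Metric.mem_closure_iff]
    intro δ hδ
    have hm : 0 < min ε δ := lt_min hε hδ
    refine ⟨((min ε δ / 2 : ℝ) : ℂ), ⟨?_, ?_⟩, ?_⟩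
    · rw [mem_ball_zero_iff, Complex.norm_real, Real.norm_of_nonneg (by positivity)]
      linarith [min_le_left ε δ]
    · simpa using hm
    · rw [dist_zero_left, Complex.norm_real, Real.norm_of_nonneg (by positivity)]
      linarith [min_le_right ε δ]
  have hkc : k = L.weierstrassP c := by
    have t1 : Tendsto (fun z ↦ N z / L.weierstrassP z ^ 2 / (D z ^ 2 / L.weierstrassP z ^ 2))
      (𝓝[V] 0) (𝓝 (L.weierstrassP c)) := by
      have := (tN.div tD one_ne_zero).mono_left hle
      rw [div_one] at this
      exact this
    refine tendsto_nhds_unique (tendsto_const_nhds.congr' ?_) t1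
    filter_upwards [self_mem_nhdsWithin, hle hne] with z hz hz0
    rw [← hk z hz]
    have := (hVs z hz).2
    have hz0 : L.weierstrassP z ≠ 0 := hz0
    field_simp
  -- the identity theorem propagates `N = ℘(c) D²` from the half disc
  have hpre : IsPreconnected ((L.lattice : Set ℂ) ∪ (fun z ↦ c - z) '' L.lattice)ᶜ :=
    isPreconnected_compl_of_countable ((countable_lattice L).union ((countable_lattice L).image _))
  have hmem : ∀ z, z ∈ ((L.lattice : Set ℂ) ∪ (fun z ↦ c - z) '' L.lattice)ᶜ ↔
      z ∉ L.lattice ∧ c - z ∉ L.lattice := by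
    intro z
    simp only [Set.mem_compl_iff, Set.mem_union, not_or, Set.mem_image, SetLike.mem_coe, not_exists,
      not_and]
    refine and_congr_right fun _ ↦ ⟨fun hz hzd ↦ hz _ hzd (by simp), fun hz x hx hxz ↦ hz ?_⟩
    rw [← hxz]; simpa using hx
  obtain ⟨z₀, hz₀⟩ : V.Nonempty := by
    rw [Set.nonempty_iff_ne_empty]; rintro h; simp [h] at hnb; exact hnb.ne rfl
  have hE : Set.EqOn (fun z ↦ N z - L.weierstrassP c * D z ^ 2) 0
      ((L.lattice : Set ℂ) ∪ (fun z ↦ c - z) '' L.lattice)ᶜ := by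
    refine AnalyticOnNhd.eqOn_zero_of_preconnected_of_eventuallyEq_zero (𝕜 := ℂ) (fun z hz ↦ ?_) hpre
      ((hmem z₀).2 (hVs z₀ hz₀).1) ?_
    · obtain ⟨h1, h2⟩ := (hmem z).1 hz
      have b1 := analyticAt_wp L h1
      have b2 := analyticAt_wp' L h1
      have b3 : AnalyticAt ℂ (fun z ↦ L.weierstrassP (c - z)) z :=
        (analyticAt_wp L h2).comp (f := fun z ↦ c - z) (by fun_prop)
      have b4 : AnalyticAt ℂ (fun z ↦ L.derivWeierstrassP (c - z)) z :=
        (analyticAt_wp' L h2).comp (f := fun z ↦ c - z) (by fun_prop)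
      simp only [hN, hD]
      fun_prop
    · filter_upwards [hVo.mem_nhds hz₀] with z hz
      have := hk z hz
      rw [div_eq_iff (pow_ne_zero 2 (hVs z hz).2)] at this
      simp [this, hkc]
  have hcu : c - u = v := by simp [hc]
  have := hE ((hmem u).2 ⟨hu, by rwa [hcu]⟩)
  simp only [hN, hD, hcu, Pi.zero_apply] at this
  linear_combination this

/-- `℘` takes the same value only at points equal up to sign modulo the lattice. -/
lemma mem_of_wp_eq {u v : ℂ} (hu : u ∉ L.lattice) (hv : v ∉ L.lattice)
    (h : L.weierstrassP u = L.weierstrassP v) : u - v ∈ L.lattice ∨ u + v ∈ L.lattice := by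
  by_contra! hcon
  have h1 := wp_add L hu hv hcon.2
  rw [h, sub_self] at h1
  have h2 : L.derivWeierstrassP u = L.derivWeierstrassP v := by
    rw [← sub_eq_zero]; simpa using h1
  exact hcon.1 (sub_mem_of_wp_eq_of_wp'_eq L hu hv h h2)

/-- The addition formula. -/
lemma wp_add_eq {u v : ℂ} (hu : u ∉ L.lattice) (hv : v ∉ L.lattice) (huv : u + v ∉ L.lattice)
    (hne : L.weierstrassP u ≠ L.weierstrassP v) :
    L.weierstrassP (u + v) = ((L.derivWeierstrassP u - L.derivWeierstrassP v) /
      (L.weierstrassP u - L.weierstrassP v)) ^ 2 / 4 - L.weierstrassP u - L.weierstrassP v := by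
  have h1 := wp_add L hu hv huv
  have h2 := sub_ne_zero.2 hne
  field_simp
  linear_combination (-4) * h1

/-- `℘'` vanishes only at points of order `2`: if `℘'(u) = 0`, then `u` and `-u` have the same `℘`
and `℘'`. -/
lemma wp'_ne_zero {u : ℂ} (hu : u ∉ L.lattice) (huu : u + u ∉ L.lattice) :
    L.derivWeierstrassP u ≠ 0 := by
  intro h0
  have := sub_mem_of_wp_eq_of_wp'_eq L hu (v := -u) (by simpa using hu) (by simp) (by simp [h0])
  simp only [sub_neg_eq_add] at this
  exact huu this

/-- The duplication formula, the limit of the addition formula. -/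
lemma wp_two_mul {u : ℂ} (hu : u ∉ L.lattice) (huu : u + u ∉ L.lattice) :
    L.weierstrassP (u + u) = ((6 * L.weierstrassP u ^ 2 - L.g₂ / 2) / L.derivWeierstrassP u) ^ 2 / 4
      - 2 * L.weierstrassP u := by
  have h0 := wp'_ne_zero L hu huu
  have s1 := hasDerivAt_iff_tendsto_slope.1 (hasDerivAt_wp L hu)
  have s2 := hasDerivAt_iff_tendsto_slope.1 (hasDerivAt_wp' L hu)
  have c1 : Tendsto L.weierstrassP (𝓝[≠] u) (𝓝 (L.weierstrassP u)) :=
    (analyticAt_wp L hu).continuousAt.tendsto.mono_left nhdsWithin_le_nhds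
  have ta : Tendsto (fun z ↦ z + u) (𝓝[≠] u) (𝓝 (u + u)) :=
    ((continuous_add_const u).tendsto u).mono_left nhdsWithin_le_nhds
  have c2 : Tendsto (fun z ↦ L.weierstrassP (z + u)) (𝓝[≠] u) (𝓝 (L.weierstrassP (u + u))) :=
    (analyticAt_wp L huu).continuousAt.tendsto.comp ta
  have t1 := ((((s2.div s1 h0).pow 2).div_const 4).sub c1).sub_const (L.weierstrassP u)
  rw [two_mul, ← sub_sub]
  refine tendsto_nhds_unique (c2.congr' ?_) t1
  filter_upwards [s1.eventually_ne h0, mem_nhdsWithin_of_mem_nhds (eventually_notMem L hu),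
    ta.eventually (eventually_notMem L huu), self_mem_nhdsWithin] with z h1 h2 h3 h4
  have h4 : z - u ≠ 0 := sub_ne_zero.2 h4
  have h5 : L.weierstrassP z ≠ L.weierstrassP u := by
    intro h; rw [slope_def_field, h, sub_self, zero_div] at h1; exact h1 rfl
  rw [wp_add_eq L h2 hu h3 h5]
  simp only [Pi.div_apply, slope_def_field]
  rw [div_div_div_cancel_right₀ h4]

/-- Points of `ℂ` whose image on the elliptic curve is `F`-rational; lattice points, the poles of
`℘`, map to the point at infinity and are always included. -/
def Rat (F : Subfield ℂ) (z : ℂ) : Prop :=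
  z ∈ L.lattice ∨ (L.weierstrassP z ∈ F ∧ L.derivWeierstrassP z ∈ F)

variable {L} in
/-- Rational points are closed under addition: `℘(u + v)` is given by the addition or duplication
formula, and `℘'(u + v)` by differentiating that formula in `u`. -/
lemma Rat.add {F : Subfield ℂ} (hg : L.g₂ ∈ F) {u v : ℂ} (hu : Rat L F u) (hv : Rat L F v) :
    Rat L F (u + v) := by
  by_cases huL : u ∈ L.lattice
  · rcases hv with hv | hv
    · exact Or.inl (add_mem huL hv)
    · right
      rw [add_comm]
      have h1 := L.weierstrassP_add_coe v ⟨u, huL⟩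
      have h2 := L.derivWeierstrassP_add_coe v ⟨u, huL⟩
      exact ⟨h1 ▸ hv.1, h2 ▸ hv.2⟩
  by_cases hvL : v ∈ L.lattice
  · rcases hu with hu | hu
    · exact Or.inl (add_mem hu hvL)
    · right
      have h1 := L.weierstrassP_add_coe u ⟨v, hvL⟩
      have h2 := L.derivWeierstrassP_add_coe u ⟨v, hvL⟩
      exact ⟨h1 ▸ hu.1, h2 ▸ hu.2⟩
  by_cases huvL : u + v ∈ L.lattice
  · exact Or.inl huvL
  have hu := hu.resolve_left huL
  have hv := hv.resolve_left hvL
  right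
  have n2 : (2:ℂ) ∈ F := ofNat_mem F 2
  have n4 : (4:ℂ) ∈ F := ofNat_mem F 4
  have n6 : (6:ℂ) ∈ F := ofNat_mem F 6
  by_cases hne : L.weierstrassP u = L.weierstrassP v
  · have hsub : u - v ∈ L.lattice := (mem_of_wp_eq L huL hvL hne).resolve_right huvL
    have hvu : v - u ∈ L.lattice := by simpa using neg_mem hsub
    have e : u + v = (u + u) + (v - u) := by ring
    have huu : u + u ∉ L.lattice := fun h ↦ huvL (e ▸ add_mem h hvu)
    rw [e]
    have h1 := L.weierstrassP_add_coe (u + u) ⟨v - u, hvu⟩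
    have h2 := L.derivWeierstrassP_add_coe (u + u) ⟨v - u, hvu⟩
    rw [h1, h2]
    refine ⟨?_, ?_⟩
    · rw [wp_two_mul L huL huu]
      exact sub_mem (div_mem (pow_mem (div_mem (sub_mem (mul_mem n6 (pow_mem hu.1 2))
        (div_mem hg n2)) hu.2) 2) n4) (mul_mem n2 hu.1)
    · have h0 := wp'_ne_zero L huL huu
      have ev : ∀ᶠ z in 𝓝 u, z ∉ L.lattice ∧ z + z ∉ L.lattice := by
        refine (eventually_notMem L huL).and ?_
        have : Tendsto (fun z : ℂ ↦ z + z) (𝓝 u) (𝓝 (u + u)) := by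
          apply Continuous.tendsto (f := fun z : ℂ ↦ z + z); fun_prop
        exact this.eventually (eventually_notMem L huu)
      have d1 : HasDerivAt (fun z ↦ L.weierstrassP (z + z))
          (L.derivWeierstrassP (u + u) * (1 + 1)) u :=
        (hasDerivAt_wp L huu).comp (h := fun z ↦ z + z) u ((hasDerivAt_id u).add (hasDerivAt_id u))
      have d2 := (((((((hasDerivAt_wp L huL).pow 2).const_mul 6).sub_const (L.g₂ / 2)).div
        (hasDerivAt_wp' L huL) h0).pow 2).div_const 4).sub ((hasDerivAt_wp L huL).const_mul 2)
      have d3 := d1.unique (d2.congr_of_eventuallyEq (by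
        filter_upwards [ev] with z hz
        rw [wp_two_mul L hz.1 hz.2]; simp))
      have d4 : L.derivWeierstrassP (u + u) = L.derivWeierstrassP (u + u) * (1 + 1) / 2 := by ring
      rw [d4, d3]
      refine div_mem ?_ n2
      have m1 : 6 * L.weierstrassP u ^ 2 - L.g₂ / 2 ∈ F :=
        sub_mem (mul_mem n6 (pow_mem hu.1 2)) (div_mem hg n2)
      simp only [Nat.cast_ofNat, Pi.pow_apply]
      refine sub_mem (div_mem (mul_mem (mul_mem n2 ?_) ?_) n4) (mul_mem n2 hu.2)
      · exact pow_mem (div_mem m1 hu.2) _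
      · refine div_mem (sub_mem (mul_mem (mul_mem n6 ?_) hu.2) (mul_mem m1 m1)) (pow_mem hu.2 2)
        exact mul_mem (mul_mem n2 (pow_mem hu.1 _)) hu.2
  · refine ⟨?_, ?_⟩
    · rw [wp_add_eq L huL hvL huvL hne]
      exact sub_mem (sub_mem (div_mem (pow_mem (div_mem (sub_mem hu.2 hv.2)
        (sub_mem hu.1 hv.1)) 2) n4) hu.1) hv.1
    · have ev : ∀ᶠ z in 𝓝 u, (z ∉ L.lattice ∧ z + v ∉ L.lattice) ∧
          L.weierstrassP z ≠ L.weierstrassP v := by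
        refine ((eventually_notMem L huL).and ?_).and ?_
        · exact ((continuous_add_const v).tendsto u).eventually (eventually_notMem L huvL)
        · exact (analyticAt_wp L huL).continuousAt.eventually_ne hne
      have d1 := (hasDerivAt_wp L huvL).comp_add_const u v
      have d2 := ((((((hasDerivAt_wp' L huL).sub_const (L.derivWeierstrassP v)).div
        ((hasDerivAt_wp L huL).sub_const (L.weierstrassP v)) (sub_ne_zero.2 hne)).pow 2).div_const
        4).sub (hasDerivAt_wp L huL)).sub_const (L.weierstrassP v)
      have d3 := d1.unique (d2.congr_of_eventuallyEq (by
        filter_upwards [ev] with z hz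
        rw [wp_add_eq L hz.1.1 hvL hz.1.2 hz.2]; simp))
      rw [d3]
      have m1 : 6 * L.weierstrassP u ^ 2 - L.g₂ / 2 ∈ F :=
        sub_mem (mul_mem n6 (pow_mem hu.1 2)) (div_mem hg n2)
      simp only [Nat.cast_ofNat]
      refine sub_mem (div_mem (mul_mem (mul_mem n2 ?_) ?_) n4) hu.2
      · exact pow_mem (div_mem (sub_mem hu.2 hv.2) (sub_mem hu.1 hv.1)) _
      · exact div_mem (sub_mem (mul_mem m1 (sub_mem hu.1 hv.1))
          (mul_mem (sub_mem hu.2 hv.2) hu.2)) (pow_mem (sub_mem hu.1 hv.1) 2)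

variable {L} in
lemma Rat.nsmul {F : Subfield ℂ} (hg : L.g₂ ∈ F) {u : ℂ} (hu : Rat L F u) (n : ℕ) :
    Rat L F (n * u) := by
  induction n with
  | zero => left; simp
  | succ n ih => simpa [add_mul] using ih.add hg hu

end Elliptic

/-! ### The sigma function: convergence, growth, and comparison with `℘` -/

section Sigma

/-- The primary factor `E(u) = (1 - u) exp(u + u²/2)` of genus `2`. -/
def pf (u : ℂ) : ℂ := (1 - u) * exp (u + u ^ 2 / 2)

lemma differentiable_pf : Differentiable ℂ pf := by
  unfold pf; fun_prop

/-- The Taylor series of `log (1 - u)` begins with `-u - u²/2`, so that `log E(u)` is `O(u³)`. -/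
lemma pf_eq_exp {u : ℂ} (hu : ‖u‖ ≤ 1 / 2) : ∃ v, pf u = exp v ∧ ‖v‖ ≤ ‖u‖ ^ 3 := by
  have h1 : 1 - u ≠ 0 := by
    intro h
    rw [sub_eq_zero] at h
    rw [← h] at hu; norm_num at hu
  refine ⟨log (1 - u) + (u + u ^ 2 / 2), ?_, ?_⟩
  · rw [exp_add, exp_log h1, pf]
  · have := norm_log_sub_logTaylor_le 2 (z := -u) (by rw [norm_neg]; linarith)
    simp only [logTaylor, Finset.sum_range_succ, Finset.sum_range_zero] at this
    have e : log (1 + -u) - (0 + (-1) ^ (0 + 1) * (-u) ^ 0 / ((0:ℕ):ℂ) +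
        (-1) ^ (1 + 1) * (-u) ^ 1 / ((1:ℕ):ℂ) + (-1) ^ (2 + 1) * (-u) ^ 2 / ((2:ℕ):ℂ)) =
        log (1 - u) + (u + u ^ 2 / 2) := by
      rw [← sub_eq_add_neg]; push_cast; simp; ring
    rw [e, norm_neg] at this
    refine this.trans ?_
    have h2 : (1 - ‖u‖)⁻¹ ≤ 2 := by
      rw [inv_le_comm₀ (by linarith) (by norm_num)]; linarith
    have h3 : 0 ≤ ‖u‖ ^ 3 := by positivity
    calc ‖u‖ ^ (2 + 1) * (1 - ‖u‖)⁻¹ / ((2:ℕ) + 1 : ℝ) ≤ ‖u‖ ^ 3 * 2 / 3 := by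
          norm_num; gcongr
      _ ≤ ‖u‖ ^ 3 := by linarith

/-- The estimate giving locally uniform convergence of the sigma product, as `∑ |ω|⁻³ < ∞`. -/
lemma norm_pf_sub_one {u : ℂ} (hu : ‖u‖ ≤ 1 / 2) : ‖pf u - 1‖ ≤ 2 * ‖u‖ ^ 3 := by
  obtain ⟨v, hv, hv'⟩ := pf_eq_exp hu
  rw [hv]
  have : ‖u‖ ^ 3 ≤ 1 := pow_le_one₀ (norm_nonneg _) (by linarith)
  exact (norm_exp_sub_one_le (hv'.trans this)).trans (by linarith)

/-- A bound valid for all `u`, which makes the sigma product an entire function of order at most `3`. -/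
lemma norm_pf_le (u : ℂ) : ‖pf u‖ ≤ Real.exp (9 * ‖u‖ ^ 3) := by
  rcases le_total ‖u‖ (1 / 2) with hu | hu
  · obtain ⟨v, hv, hv'⟩ := pf_eq_exp hu
    rw [hv]
    refine (norm_exp_le_exp_norm v).trans (Real.exp_le_exp.2 ?_)
    have h3 : 0 ≤ ‖u‖ ^ 3 := by positivity
    linarith
  · have h1 : ‖1 - u‖ ≤ Real.exp ‖u‖ := by
      refine (norm_sub_le _ _).trans ?_
      rw [norm_one, add_comm]; exact Real.add_one_le_exp _
    have h2 : ‖exp (u + u ^ 2 / 2)‖ ≤ Real.exp (‖u‖ + ‖u‖ ^ 2 / 2) := by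
      refine (norm_exp_le_exp_norm _).trans (Real.exp_le_exp.2 ?_)
      refine (norm_add_le _ _).trans ?_
      simp
    rw [pf, norm_mul]
    refine (mul_le_mul h1 h2 (norm_nonneg _) (Real.exp_pos _).le).trans ?_
    rw [← Real.exp_add]
    refine Real.exp_le_exp.2 ?_
    nlinarith [mul_nonneg (norm_nonneg u) (mul_nonneg (sub_nonneg.2 hu) (sub_nonneg.2 hu)),
      mul_nonneg (norm_nonneg u) (sub_nonneg.2 hu)]

lemma pf_ne_zero {u : ℂ} (hu : u ≠ 1) : pf u ≠ 0 :=
  mul_ne_zero (sub_ne_zero.2 hu.symm) (exp_ne_zero _)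

variable (L : PeriodPair)

lemma coe_lattice : LatticePts L.ω₁ L.ω₂ = L.lattice := by
  ext z
  simp only [LatticePts, Set.mem_ofPred_eq, SetLike.mem_coe, mem_lattice]
  exact exists₂_congr fun m n ↦ eq_comm

/-- Sums over the lattice are sums over the nonzero lattice points plus the term at `0`. -/
lemma hasSum_nonzero {E : Type*} [NormedAddCommGroup E] {f : ℂ → E} {a : E}
    (h : HasSum (fun l : L.lattice ↦ f l) a) :
    HasSum (fun w : LatticePts' L.ω₁ L.ω₂ ↦ f w) (a - f 0) := by
  have h1 : HasSum ((L.lattice : Set ℂ).indicator f) a :=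
    (hasSum_subtype_iff_indicator (s := (L.lattice : Set ℂ))).1 h
  have h2 : HasSum (fun z : ℂ ↦ if z = 0 then f 0 else 0) (f 0) := hasSum_ite_eq 0 (f 0)
  refine (hasSum_subtype_iff_indicator (s := LatticePts' L.ω₁ L.ω₂)).2 ?_
  convert h1.sub h2 using 2 with z
  have hm : z ∈ LatticePts' L.ω₁ L.ω₂ ↔ z ∈ L.lattice ∧ z ≠ 0 := by
    rw [LatticePts', coe_lattice]; rfl
  by_cases hz : z = 0
  · subst hz
    rw [Set.indicator_of_notMem (by simp [hm]), Set.indicator_of_mem (by simp)]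
    simp
  · by_cases hzL : z ∈ L.lattice
    · rw [Set.indicator_of_mem (hm.2 ⟨hzL, hz⟩), Set.indicator_of_mem (by simpa)]
      simp [hz]
    · rw [Set.indicator_of_notMem (by simp [hm, hzL]), Set.indicator_of_notMem (by simpa)]
      simp [hz]

lemma finrank_lattice : Module.finrank ℤ L.lattice = 2 := by
  rw [ZLattice.rank ℝ L.lattice]; simp

lemma summable_inv_pow {n : ℕ} (hn : 2 < n) :
    Summable fun w : LatticePts' L.ω₁ L.ω₂ ↦ (‖(w : ℂ)‖ ^ n)⁻¹ := by
  have h := ZLattice.summable_norm_pow_inv L.lattice n (by rwa [finrank_lattice])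
  have := (hasSum_nonzero L (f := fun z ↦ ‖z‖⁻¹ ^ n) h.hasSum).summable
  simpa using this

lemma g2_eq : g2 L.ω₁ L.ω₂ = L.g₂ := by
  have h : Summable fun l : L.lattice ↦ ((l : ℂ) ^ 4)⁻¹ := by
    refine Summable.of_norm ?_
    simpa using ZLattice.summable_norm_pow_inv L.lattice 4 (by simp)
  have := (hasSum_nonzero L (f := fun z : ℂ ↦ (z ^ 4)⁻¹) h.hasSum).tsum_eq
  rw [g2, this]; simp [PeriodPair.g₂, PeriodPair.G]

lemma g3_eq : g3 L.ω₁ L.ω₂ = L.g₃ := by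
  have h : Summable fun l : L.lattice ↦ ((l : ℂ) ^ 6)⁻¹ := by
    refine Summable.of_norm ?_
    simpa using ZLattice.summable_norm_pow_inv L.lattice 6 (by simp)
  have := (hasSum_nonzero L (f := fun z : ℂ ↦ (z ^ 6)⁻¹) h.hasSum).tsum_eq
  rw [g3, this]; simp [PeriodPair.g₃, PeriodPair.G]

variable {L} in
lemma ne_zero (w : LatticePts' L.ω₁ L.ω₂) : (w : ℂ) ≠ 0 := w.2.2

lemma eventually_norm_ge (R : ℝ) :
    ∀ᶠ w : LatticePts' L.ω₁ L.ω₂ in cofinite, R ≤ ‖(w : ℂ)‖ := by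
  rcases le_or_gt R 0 with hR | hR
  · exact .of_forall fun w ↦ hR.trans (norm_nonneg _)
  have h := (summable_inv_pow L (n := 3) (by norm_num)).tendsto_cofinite_zero
  filter_upwards [h.eventually_lt_const (u := (R ^ 3)⁻¹) (by positivity)] with w hw
  have hw0 : 0 < ‖(w : ℂ)‖ := norm_pos_iff.2 (ne_zero w)
  rw [inv_lt_inv₀ (by positivity) (by positivity)] at hw
  exact (lt_of_pow_lt_pow_left₀ 3 hw0.le hw).le

/-- The infinite product in the definition of `σ`. -/
def sigmaProd (z : ℂ) : ℂ := ∏' w : LatticePts' L.ω₁ L.ω₂, pf (z / w)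

lemma wSigma_eq (z : ℂ) : wSigma L.ω₁ L.ω₂ z = z * sigmaProd L z := by
  unfold wSigma sigmaProd pf
  congr 2
  ext w
  congr 2
  have := ne_zero w
  field_simp

lemma hasProdLocallyUniformlyOn_sigma (R : ℝ) :
    HasProdLocallyUniformlyOn (fun (w : LatticePts' L.ω₁ L.ω₂) z ↦ pf (z / w)) (sigmaProd L)
      (Metric.ball 0 R) := by
  have := Summable.hasProdLocallyUniformlyOn_one_add (f := fun (w : LatticePts' L.ω₁ L.ω₂) z ↦
      pf (z / w) - 1) (K := Metric.ball 0 R) Metric.isOpen_ball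
    ((summable_inv_pow L (n := 3) (by norm_num)).mul_left (2 * R ^ 3)) ?_ ?_
  · simpa only [add_sub_cancel] using! this
  · filter_upwards [eventually_norm_ge L (2 * R)] with w hw z hz
    rw [mem_ball_zero_iff] at hz
    have hw0 : 0 < ‖(w : ℂ)‖ := norm_pos_iff.2 (ne_zero w)
    refine (norm_pf_sub_one ?_).trans ?_
    · rw [norm_div, div_le_iff₀ hw0]; linarith
    · rw [norm_div, div_pow, mul_assoc, ← div_eq_mul_inv]
      gcongr
  · intro w
    have := differentiable_pf.continuous
    fun_prop

lemma differentiable_sigmaProd : Differentiable ℂ (sigmaProd L) := by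
  intro z
  have h := hasProdLocallyUniformlyOn_iff_tendstoLocallyUniformlyOn.1
    (hasProdLocallyUniformlyOn_sigma L (‖z‖ + 1))
  refine (h.differentiableOn (.of_forall fun s ↦ ?_) Metric.isOpen_ball).differentiableAt
    (Metric.isOpen_ball.mem_nhds (by simp))
  have := differentiable_pf
  fun_prop

lemma differentiable_wSigma : Differentiable ℂ (wSigma L.ω₁ L.ω₂) := by
  have : wSigma L.ω₁ L.ω₂ = fun z ↦ z * sigmaProd L z := funext (wSigma_eq L)
  rw [this]
  exact differentiable_id.mul (differentiable_sigmaProd L)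

lemma sigmaProd_ne_zero {z : ℂ} (hz : z ∉ L.lattice) : sigmaProd L z ≠ 0 := by
  have := tprod_one_add_ne_zero_of_summable (f := fun (w : LatticePts' L.ω₁ L.ω₂) ↦
      pf (z / w) - 1) ?_ ?_
  · simpa only [add_sub_cancel] using! this
  · intro w
    rw [add_sub_cancel]
    refine pf_ne_zero fun h ↦ hz ?_
    rw [div_eq_one_iff_eq (ne_zero w)] at h
    rw [h]
    have := w.2.1
    rwa [coe_lattice] at this
  · refine Summable.of_norm_bounded_eventually
      ((summable_inv_pow L (n := 3) (by norm_num)).mul_left (2 * ‖z‖ ^ 3)) ?_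
    filter_upwards [eventually_norm_ge L (2 * ‖z‖)] with w hw
    have hw0 : 0 < ‖(w : ℂ)‖ := norm_pos_iff.2 (ne_zero w)
    rw [norm_norm]
    refine (norm_pf_sub_one ?_).trans ?_
    · rw [norm_div, div_le_iff₀ hw0]; linarith
    · rw [norm_div, div_pow, mul_assoc, ← div_eq_mul_inv]

lemma wSigma_ne_zero {z : ℂ} (hz : z ∉ L.lattice) : wSigma L.ω₁ L.ω₂ z ≠ 0 := by
  rw [wSigma_eq]
  refine mul_ne_zero ?_ (sigmaProd_ne_zero L hz)
  rintro rfl; simp at hz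

/-- `σ` has order of growth at most `3`; this crude bound is all that is needed. -/
lemma exists_norm_wSigma_le : ∃ C : ℝ, 0 < C ∧ ∀ z : ℂ,
    ‖wSigma L.ω₁ L.ω₂ z‖ ≤ Real.exp (C * (1 + ‖z‖) ^ 3) := by
  set S := ∑' w : LatticePts' L.ω₁ L.ω₂, (‖(w : ℂ)‖ ^ 3)⁻¹ with hS
  have hS0 : 0 ≤ S := tsum_nonneg fun _ ↦ by positivity
  have hsum := summable_inv_pow L (n := 3) (by norm_num)
  refine ⟨1 + 9 * S, by positivity, fun z ↦ ?_⟩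
  have hb : ‖sigmaProd L z‖ ≤ Real.exp (9 * ‖z‖ ^ 3 * S) := by
    have h1 : HasProd (fun w : LatticePts' L.ω₁ L.ω₂ ↦ pf (z / w)) (sigmaProd L z) :=
      (hasProdLocallyUniformlyOn_sigma L (‖z‖ + 1)).hasProd (by simp)
    refine le_of_tendsto (h1.norm) (.of_forall fun s ↦ ?_)
    have : ∀ w ∈ s, ‖pf (z / w)‖ ≤ Real.exp (9 * ‖z‖ ^ 3 * (‖(w : ℂ)‖ ^ 3)⁻¹) := fun w _ ↦ by
      refine (norm_pf_le _).trans_eq ?_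
      rw [norm_div, div_pow, mul_assoc, ← div_eq_mul_inv]
    refine (Finset.prod_le_prod (fun _ _ ↦ norm_nonneg _) this).trans ?_
    rw [← Real.exp_sum, ← Finset.mul_sum]
    gcongr
    exact hsum.sum_le_tsum _ fun _ _ ↦ by positivity
  rw [wSigma_eq, norm_mul]
  have hz : ‖z‖ ≤ Real.exp ‖z‖ := by linarith [Real.add_one_le_exp ‖z‖]
  refine (mul_le_mul hz hb (norm_nonneg _) (Real.exp_pos _).le).trans ?_
  rw [← Real.exp_add, Real.exp_le_exp]
  have hz0 := norm_nonneg z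
  have h1 : ‖z‖ ^ 3 ≤ (1 + ‖z‖) ^ 3 := by gcongr; linarith
  have h2 : ‖z‖ ≤ (1 + ‖z‖) ^ 3 := by nlinarith [mul_nonneg hz0 hz0, mul_nonneg (mul_nonneg hz0 hz0) hz0]
  nlinarith

lemma logDeriv_pf_div {w z : ℂ} (hw : w ≠ 0) (hz : z ≠ w) :
    logDeriv (fun z ↦ pf (z / w)) z = 1 / (z - w) + 1 / w + z / w ^ 2 := by
  have h1 : 1 - z / w ≠ 0 := by
    rw [sub_ne_zero, ne_comm, Ne, div_eq_one_iff_eq hw]; exact hz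
  have h2 : z - w ≠ 0 := sub_ne_zero.2 hz
  have h3 : HasDerivAt (fun z ↦ z / w) (1 / w) z := (hasDerivAt_id z).div_const w
  have h4 := (h3.const_sub 1).mul ((h3.add ((h3.pow 2).div_const 2)).cexp)
  have h5 : HasDerivAt (fun z ↦ pf (z / w)) _ z := h4
  rw [logDeriv_apply, h5.deriv]
  have h7 : w - z ≠ 0 := sub_ne_zero.2 hz.symm
  simp only [pf, Pi.add_apply, Pi.pow_apply]
  have h6 := exp_ne_zero (z / w + (z / w) ^ 2 / 2)
  rw [div_eq_iff (mul_ne_zero h1 h6)]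
  have e : 1 - z / w = -(z - w) / w := by field_simp; ring
  rw [e]
  field_simp
  push_cast
  field_simp
  ring

/-- Near a point off the lattice the distance to a lattice point `w` is comparable to `‖w‖`. -/
lemma exists_dist_ge {z₀ : ℂ} (hz₀ : z₀ ∉ L.lattice) : ∃ c > 0, ∃ ε > 0, ∀ z ∈ Metric.ball z₀ ε,
    z ∉ L.lattice ∧ ∀ w : LatticePts' L.ω₁ L.ω₂, c * ‖(w : ℂ)‖ ≤ ‖z - w‖ := by
  obtain ⟨ε, hε, hb⟩ := Metric.eventually_nhds_iff_ball.1 (eventually_notMem L hz₀)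
  set R := ‖z₀‖ + ε with hR
  have hR0 : 0 < R := by positivity
  refine ⟨min (1 / 2) (ε / 2 / (2 * R)), by positivity, ε / 2, by positivity, fun z hz ↦
    ⟨hb z (Metric.ball_subset_ball (by linarith) hz), fun w ↦ ?_⟩⟩
  rw [mem_ball_iff_norm] at hz
  have hzR : ‖z‖ ≤ R := by
    have := norm_add_le (z - z₀) z₀
    rw [sub_add_cancel] at this; linarith
  rcases le_total (2 * R) ‖(w : ℂ)‖ with hw | hw
  · refine (mul_le_mul_of_nonneg_right (min_le_left _ _) (norm_nonneg _)).trans ?_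
    have := norm_sub_norm_le (w : ℂ) z
    rw [norm_sub_rev] at this; linarith
  · refine (mul_le_mul_of_nonneg_right (min_le_right _ _) (norm_nonneg _)).trans ?_
    calc ε / 2 / (2 * R) * ‖(w : ℂ)‖ ≤ ε / 2 / (2 * R) * (2 * R) := by gcongr
      _ = ε / 2 := by field_simp
      _ ≤ ‖z - w‖ := by
        by_contra! hcon
        have hwL : (w : ℂ) ∈ L.lattice := by
          have := w.2.1
          rwa [coe_lattice] at this
        refine hb w ?_ hwL
        rw [mem_ball_iff_norm]
        have := norm_add_le (w - z) (z - z₀)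
        rw [sub_add_sub_cancel, norm_sub_rev (w : ℂ) z] at this
        linarith

lemma summable_zeta {z : ℂ} (hz : z ∉ L.lattice) :
    Summable fun w : LatticePts' L.ω₁ L.ω₂ ↦ 1 / (z - w) + 1 / (w : ℂ) + z / (w : ℂ) ^ 2 := by
  obtain ⟨c, hc, ε, hε, hb⟩ := exists_dist_ge L hz
  obtain ⟨-, hb⟩ := hb z (Metric.mem_ball_self hε)
  refine Summable.of_norm_bounded
    ((summable_inv_pow L (n := 3) (by norm_num)).mul_left (‖z‖ ^ 2 / c)) fun w ↦ ?_
  have hw0 : 0 < ‖(w : ℂ)‖ := norm_pos_iff.2 (ne_zero w)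
  have h1 : 0 < ‖z - w‖ := lt_of_lt_of_le (by positivity) (hb w)
  have h2 : z - w ≠ 0 := norm_pos_iff.1 h1
  have h3 := ne_zero w
  have e : 1 / (z - w) + 1 / (w : ℂ) + z / (w : ℂ) ^ 2 = z ^ 2 / ((w : ℂ) ^ 2 * (z - w)) := by
    field_simp; ring
  rw [e, norm_div, norm_mul, norm_pow, norm_pow, ← div_eq_mul_inv, div_div]
  have := hb w
  calc ‖z‖ ^ 2 / (‖(w : ℂ)‖ ^ 2 * ‖z - w‖) ≤ ‖z‖ ^ 2 / (‖(w : ℂ)‖ ^ 2 * (c * ‖(w : ℂ)‖)) := by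
        gcongr
    _ = _ := by congr 1; ring

/-- The partial fraction expansion of `ζ`, the logarithmic derivative of the sigma product. -/
lemma wZeta_eq {z : ℂ} (hz : z ∉ L.lattice) : wZeta L.ω₁ L.ω₂ z =
    1 / z + ∑' w : LatticePts' L.ω₁ L.ω₂, (1 / (z - w) + 1 / (w : ℂ) + z / (w : ℂ) ^ 2) := by
  have hz0 : z ≠ 0 := by rintro rfl; simp at hz
  have hzw : ∀ w : LatticePts' L.ω₁ L.ω₂, z ≠ w := fun w h ↦ hz (by
    have := w.2.1
    rw [coe_lattice] at this
    rwa [h])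
  have h1 : wSigma L.ω₁ L.ω₂ = fun z ↦ z * sigmaProd L z := funext (wSigma_eq L)
  have h2 : wZeta L.ω₁ L.ω₂ z = logDeriv (wSigma L.ω₁ L.ω₂) z := rfl
  rw [h2, h1, logDeriv_mul (f := fun z ↦ z) z hz0 (sigmaProd_ne_zero L hz) differentiableAt_id
    (differentiable_sigmaProd L z)]
  congr 1
  · rw [logDeriv_apply]; simp
  have hP : sigmaProd L = fun z ↦ ∏' w : LatticePts' L.ω₁ L.ω₂, pf (z / w) := rfl
  rw [hP]
  have h3 : ∀ w : LatticePts' L.ω₁ L.ω₂, logDeriv (fun z ↦ pf (z / w)) z =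
      1 / (z - w) + 1 / (w : ℂ) + z / (w : ℂ) ^ 2 := fun w ↦ logDeriv_pf_div (ne_zero w) (hzw w)
  rw [logDeriv_tprod_eq_tsum (f := fun (w : LatticePts' L.ω₁ L.ω₂) z ↦ pf (z / w))
    (s := Metric.ball 0 (‖z‖ + 1)) Metric.isOpen_ball (by simp)]
  · exact tsum_congr h3
  · exact fun w ↦ pf_ne_zero fun h ↦ hzw w ((div_eq_one_iff_eq (ne_zero w)).1 h)
  · intro w
    have := differentiable_pf
    fun_prop
  · simpa only [h3] using summable_zeta L hz
  · exact (hasProdLocallyUniformlyOn_sigma L _).multipliableLocallyUniformlyOn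
  · exact sigmaProd_ne_zero L hz

/-- Off the lattice, `-ζ'` is Mathlib's `℘`. -/
lemma wP_eq {z : ℂ} (hz : z ∉ L.lattice) : wP L.ω₁ L.ω₂ z = L.weierstrassP z := by
  obtain ⟨c, hc, ε, hε, hb⟩ := exists_dist_ge L hz
  have h0 : ∀ y ∈ Metric.ball z ε, y ≠ 0 := fun y hy h ↦ (hb y hy).1 (by simp [h])
  have hne : ∀ y ∈ Metric.ball z ε, ∀ w : LatticePts' L.ω₁ L.ω₂, y - w ≠ 0 := fun y hy w ↦ by
    have hw0 : 0 < ‖(w : ℂ)‖ := norm_pos_iff.2 (ne_zero w)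
    exact norm_pos_iff.1 (lt_of_lt_of_le (by positivity) ((hb y hy).2 w))
  set R := ‖z‖ + ε with hR
  -- the expansion of `ζ` may be differentiated termwise, the differentiated terms being `O(|w|⁻³)`
  have hd : HasDerivAt (fun y ↦ ∑' w : LatticePts' L.ω₁ L.ω₂,
      (1 / (y - w) + 1 / (w : ℂ) + y / (w : ℂ) ^ 2))
      (∑' w : LatticePts' L.ω₁ L.ω₂, (-(1 / (z - w) ^ 2) + 1 / (w : ℂ) ^ 2)) z := by
    refine hasDerivAt_tsum_of_isPreconnected
      (g := fun (w : LatticePts' L.ω₁ L.ω₂) y ↦ 1 / (y - w) + 1 / (w : ℂ) + y / (w : ℂ) ^ 2)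
      (g' := fun (w : LatticePts' L.ω₁ L.ω₂) y ↦ -(1 / (y - w) ^ 2) + 1 / (w : ℂ) ^ 2)
      ((summable_inv_pow L (n := 3) (by norm_num)).mul_left (R / c + R / c ^ 2))
      Metric.isOpen_ball (convex_ball z ε).isPreconnected (fun w y hy ↦ ?_) (fun w y hy ↦ ?_)
      (Metric.mem_ball_self hε) (summable_zeta L hz) (Metric.mem_ball_self hε)
    · have a1 := (((hasDerivAt_id y).sub_const (w : ℂ)).inv (hne y hy w)).add_const (1 / (w : ℂ))
      have a2 := a1.add ((hasDerivAt_id y).div_const ((w : ℂ) ^ 2))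
      refine HasDerivAt.congr_deriv (f := fun y ↦ 1 / (y - w) + 1 / (w : ℂ) + y / (w : ℂ) ^ 2)
        (by simpa only [one_div] using! a2) ?_
      simp [neg_div]
    · have hw0 : 0 < ‖(w : ℂ)‖ := norm_pos_iff.2 (ne_zero w)
      have hw := ne_zero w
      have hyw := hne y hy w
      have hle := (hb y hy).2 w
      have hyR : ‖y‖ ≤ R := by
        rw [mem_ball_iff_norm] at hy
        have := norm_add_le (y - z) z
        rw [sub_add_cancel] at this; linarith
      have e : -(1 / (y - (w : ℂ)) ^ 2) + 1 / (w : ℂ) ^ 2 =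
          y / ((y - w) * w ^ 2) - y / ((y - w) ^ 2 * w) := by
        field_simp; ring
      rw [e]
      refine (norm_sub_le _ _).trans ?_
      simp only [norm_div, norm_mul, norm_pow]
      have hR0 : 0 ≤ R := by positivity
      calc ‖y‖ / (‖y - w‖ * ‖(w : ℂ)‖ ^ 2) + ‖y‖ / (‖y - w‖ ^ 2 * ‖(w : ℂ)‖)
          ≤ R / ((c * ‖(w : ℂ)‖) * ‖(w : ℂ)‖ ^ 2) + R / ((c * ‖(w : ℂ)‖) ^ 2 * ‖(w : ℂ)‖) := by
            gcongr
        _ = _ := by field_simp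
  have hd2 := ((hasDerivAt_inv (h0 z (Metric.mem_ball_self hε))).add hd)
  have hz' : HasDerivAt (wZeta L.ω₁ L.ω₂) (-(z ^ 2)⁻¹ +
      ∑' w : LatticePts' L.ω₁ L.ω₂, (-(1 / (z - w) ^ 2) + 1 / (w : ℂ) ^ 2)) z := by
    refine hd2.congr_of_eventuallyEq ?_
    filter_upwards [Metric.ball_mem_nhds z hε] with y hy
    rw [wZeta_eq L (hb y hy).1]; simp
  rw [wP, hz'.deriv]
  have h3 := (hasSum_nonzero L (f := fun l ↦ 1 / (z - l) ^ 2 - 1 / l ^ 2)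
    (L.hasSum_weierstrassP z)).neg.tsum_eq
  have h4 : ∀ w : LatticePts' L.ω₁ L.ω₂, -(1 / (z - w) ^ 2) + 1 / (w : ℂ) ^ 2 =
    -(1 / (z - w) ^ 2 - 1 / (w : ℂ) ^ 2) := fun w ↦ by ring
  simp only [h4]
  rw [h3]; simp

/-- Growth of order `3` passes to the derivative, by the Cauchy estimate on unit circles. -/
lemma exists_norm_deriv_le {f : ℂ → ℂ} (hf : Differentiable ℂ f) {C : ℝ} (hC : 0 < C)
    (h : ∀ z, ‖f z‖ ≤ Real.exp (C * (1 + ‖z‖) ^ 3)) (z : ℂ) :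
    ‖deriv f z‖ ≤ Real.exp (8 * C * (1 + ‖z‖) ^ 3) := by
  have := norm_deriv_le_of_forall_mem_sphere_norm_le (c := z) (f := f) (R := 1)
    (C := Real.exp (8 * C * (1 + ‖z‖) ^ 3)) one_pos hf.diffContOnCl fun w hw ↦ ?_
  · simpa using this
  · refine (h w).trans (Real.exp_le_exp.2 ?_)
    have hw' : ‖w‖ ≤ ‖z‖ + 1 := by
      rw [mem_sphere_iff_norm] at hw
      have := norm_add_le (w - z) z
      rw [sub_add_cancel] at this; linarith
    have hz0 := norm_nonneg z
    calc C * (1 + ‖w‖) ^ 3 ≤ C * (2 * (1 + ‖z‖)) ^ 3 := by gcongr; linarith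
      _ = 8 * C * (1 + ‖z‖) ^ 3 := by ring

/-- `℘` is a quotient `Q / σ²` of entire functions of order at most `3`, the denominator being
zero-free off the lattice. -/
lemma exists_entire_quotient : ∃ S Q : ℂ → ℂ, Differentiable ℂ S ∧ Differentiable ℂ Q ∧
    (∀ z ∉ L.lattice, S z ≠ 0) ∧ (∀ z ∉ L.lattice, L.weierstrassP z * S z = Q z) ∧
    ∃ C : ℝ, 0 < C ∧ ∀ z, ‖S z‖ ≤ Real.exp (C * (1 + ‖z‖) ^ 3) ∧
      ‖Q z‖ ≤ Real.exp (C * (1 + ‖z‖) ^ 3) := by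
  obtain ⟨C, hC, hCb⟩ := exists_norm_wSigma_le L
  set σ := wSigma L.ω₁ L.ω₂ with hσ
  have dσ : Differentiable ℂ σ := differentiable_wSigma L
  have d1 : Differentiable ℂ (deriv σ) :=
    (dσ.contDiff (n := 2)).differentiable_deriv_two
  have d2 : Differentiable ℂ (deriv (deriv σ)) := fun z ↦
    ((d1.differentiableOn (s := Set.univ)).deriv isOpen_univ).differentiableAt univ_mem
  have b1 := exists_norm_deriv_le dσ hC hCb
  have b2 := exists_norm_deriv_le d1 (by positivity) b1
  refine ⟨fun z ↦ σ z ^ 2, fun z ↦ deriv σ z ^ 2 - σ z * deriv (deriv σ) z, dσ.pow 2,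
    (d1.pow 2).sub (dσ.mul d2), fun z hz ↦ pow_ne_zero 2 (wSigma_ne_zero L hz), fun z hz ↦ ?_,
    65 * C + 1, by positivity, fun z ↦ ⟨?_, ?_⟩⟩
  · have h0 := wSigma_ne_zero L hz
    have h1 : HasDerivAt (wZeta L.ω₁ L.ω₂) _ z :=
      (d1 z).hasDerivAt.div (dσ z).hasDerivAt h0
    rw [← wP_eq L hz, wP, h1.deriv]
    field_simp
    ring
  · rw [norm_pow]
    have hz1 : 0 ≤ (1 + ‖z‖) ^ 3 := by positivity
    calc ‖σ z‖ ^ 2 ≤ Real.exp (C * (1 + ‖z‖) ^ 3) ^ 2 := by gcongr; exact hCb z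
      _ = Real.exp (2 * C * (1 + ‖z‖) ^ 3) := by rw [← Real.exp_nat_mul]; congr 1; push_cast; ring
      _ ≤ _ := Real.exp_le_exp.2 (by nlinarith)
  · have hz1 : 1 ≤ (1 + ‖z‖) ^ 3 := one_le_pow₀ (by linarith [norm_nonneg z])
    refine (norm_sub_le _ _).trans ?_
    rw [norm_pow, norm_mul]
    have t1 : ‖deriv σ z‖ ^ 2 ≤ Real.exp (65 * C * (1 + ‖z‖) ^ 3) := by
      calc ‖deriv σ z‖ ^ 2 ≤ Real.exp (8 * C * (1 + ‖z‖) ^ 3) ^ 2 := by gcongr; exact b1 z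
        _ = Real.exp (16 * C * (1 + ‖z‖) ^ 3) := by
          rw [← Real.exp_nat_mul]; congr 1; push_cast; ring
        _ ≤ _ := Real.exp_le_exp.2 (by nlinarith)
    have t2 : ‖σ z‖ * ‖deriv (deriv σ) z‖ ≤ Real.exp (65 * C * (1 + ‖z‖) ^ 3) := by
      calc ‖σ z‖ * ‖deriv (deriv σ) z‖ ≤ Real.exp (C * (1 + ‖z‖) ^ 3) *
            Real.exp (8 * (8 * C) * (1 + ‖z‖) ^ 3) := by gcongr; exacts [hCb z, b2 z]
        _ = _ := by rw [← Real.exp_add]; congr 1; ring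
    have t3 : (2:ℝ) ≤ Real.exp ((1 + ‖z‖) ^ 3) := by
      linarith [Real.add_one_le_exp ((1 + ‖z‖) ^ 3)]
    calc _ ≤ 2 * Real.exp (65 * C * (1 + ‖z‖) ^ 3) := by linarith
      _ ≤ Real.exp ((1 + ‖z‖) ^ 3) * Real.exp (65 * C * (1 + ‖z‖) ^ 3) := by gcongr
      _ = _ := by rw [← Real.exp_add]; congr 1; ring

end Sigma

/-! ### Algebraic independence of `℘(z)` and `℘(αz)` -/

section Independence
variable (L : PeriodPair)

/-- The monomial `℘(z)^i ℘(αz)^j`. -/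
def mono (α : ℂ) {n : ℕ} (b : Fin n × Fin n) (z : ℂ) : ℂ :=
  L.weierstrassP z ^ (b.1 : ℕ) * L.weierstrassP (α * z) ^ (b.2 : ℕ)

lemma countable_wp_fiber (r : ℂ) : {z | z ∉ L.lattice ∧ L.weierstrassP z = r}.Countable := by
  rcases Set.eq_empty_or_nonempty {z | z ∉ L.lattice ∧ L.weierstrassP z = r} with h | ⟨v, hv, hvr⟩
  · rw [h]; exact Set.countable_empty
  refine (((countable_lattice L).image (fun w ↦ v + w)).union
    ((countable_lattice L).image (fun w ↦ w - v))).mono ?_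
  rintro z ⟨hz, hzr⟩
  rcases mem_of_wp_eq L hz hv (hzr.trans hvr.symm) with h | h
  · exact Or.inl ⟨z - v, h, by simp⟩
  · exact Or.inr ⟨z + v, h, by simp⟩

/-- If `α` is not an endomorphism (up to isogeny) then `℘(z)` and `℘(αz)` are algebraically
independent functions. Otherwise, for a fixed generic `z₀`, the numbers `℘(α(z₀ + nω))` for
`n ∈ ℕ` would all be roots of one polynomial, so that `nαω ∈ Λ` for some `n ≠ 0`. -/
lemma exists_ne_zero (α : ℂ) (hα : α ∉ endQ L.ω₁ L.ω₂) {n : ℕ} (x : Fin n × Fin n → ℂ)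
    (hx : x ≠ 0) : ∃ z, z ∉ L.lattice ∧ α * z ∉ L.lattice ∧ ∑ b, x b * mono L α b z ≠ 0 := by
  by_contra! hcon
  obtain ⟨⟨i₀, j₀⟩, hb₀⟩ := Function.ne_iff.1 hx
  have hα0 : α ≠ 0 := by
    rintro rfl
    exact hα ⟨1, one_ne_zero, fun w _ ↦ by rw [coe_lattice]; simp⟩
  have hcL := countable_lattice L
  set P : Polynomial ℂ := ∑ i : Fin n, Polynomial.C (x (i, j₀)) * Polynomial.X ^ (i : ℕ) with hP
  have hP0 : P ≠ 0 := by
    intro h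
    have := congr_arg (fun p ↦ Polynomial.coeff p i₀) h
    simp only [hP, Polynomial.finsetSum_coeff, Polynomial.coeff_C_mul, Polynomial.coeff_X_pow,
      Fin.val_inj, Polynomial.coeff_zero, mul_ite, mul_one, mul_zero, Finset.sum_ite_eq,
      Finset.mem_univ, if_true] at this
    exact hb₀ this
  -- a generic point: `z₀` and all `α (z₀ + w)` avoid the poles, `P (℘ z₀) ≠ 0`, and no
  -- `α (z₀ + w)`, `-α (z₀ + w')` with `w, w'` in the lattice are congruent modulo the lattice
  obtain ⟨z₀, hz₀⟩ : ∃ z₀, z₀ ∉ (L.lattice : Set ℂ) ∪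
      (⋃ w ∈ (L.lattice : Set ℂ), (fun v ↦ α⁻¹ * v - w) '' (L.lattice : Set ℂ)) ∪
      (⋃ w ∈ (L.lattice : Set ℂ), (fun v ↦ (α⁻¹ * v - w) / 2) '' (L.lattice : Set ℂ)) ∪
      (⋃ r ∈ P.roots.toFinset, {z | z ∉ L.lattice ∧ L.weierstrassP z = r}) := by
    have hc : ((L.lattice : Set ℂ) ∪
      (⋃ w ∈ (L.lattice : Set ℂ), (fun v ↦ α⁻¹ * v - w) '' (L.lattice : Set ℂ)) ∪
      (⋃ w ∈ (L.lattice : Set ℂ), (fun v ↦ (α⁻¹ * v - w) / 2) '' (L.lattice : Set ℂ)) ∪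
      (⋃ r ∈ P.roots.toFinset, {z | z ∉ L.lattice ∧ L.weierstrassP z = r})).Countable :=
      ((hcL.union (hcL.biUnion fun _ _ ↦ hcL.image _)).union
        (hcL.biUnion fun _ _ ↦ hcL.image _)).union
        (P.roots.toFinset.countable_toSet.biUnion fun r _ ↦ countable_wp_fiber L r)
    exact (hc.dense_compl ℝ).nonempty
  simp only [Set.mem_union, not_or, Set.mem_iUnion, Set.mem_image, not_exists, not_and] at hz₀
  obtain ⟨⟨⟨h1, h2⟩, h3⟩, h4⟩ := hz₀
  have h2' : ∀ w ∈ L.lattice, α * (z₀ + w) ∉ L.lattice := fun w hw h ↦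
    h2 w hw _ h (by rw [inv_mul_cancel_left₀ hα0]; ring)
  have h3' : ∀ w ∈ L.lattice, α * (2 * z₀ + w) ∉ L.lattice := fun w hw h ↦
    h3 w hw _ h (by rw [inv_mul_cancel_left₀ hα0]; ring)
  have h4' : P.eval (L.weierstrassP z₀) ≠ 0 := fun h ↦
    h4 (L.weierstrassP z₀) (by simpa [hP0] using h) ⟨h1, rfl⟩
  set q : Polynomial ℂ := ∑ b : Fin n × Fin n,
    Polynomial.C (x b * L.weierstrassP z₀ ^ (b.1 : ℕ)) * Polynomial.X ^ (b.2 : ℕ) with hq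
  have hq0 : q ≠ 0 := by
    intro h
    have := congr_arg (fun p ↦ Polynomial.coeff p j₀) h
    simp only [hq, Polynomial.finsetSum_coeff, Polynomial.coeff_C_mul, Polynomial.coeff_X_pow,
      Fin.val_inj, Polynomial.coeff_zero, mul_ite, mul_one, mul_zero,
      Fintype.sum_prod_type, Finset.sum_ite_eq, Finset.mem_univ, if_true] at this
    refine h4' ?_
    rw [← this, hP, Polynomial.eval_finsetSum]
    simp
  have key : ∀ w ∈ L.lattice, ∃ m : ℤ, m ≠ 0 ∧ m * α * w ∈ L.lattice := by
    intro w hw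
    have hnw : ∀ n : ℕ, n * w ∈ L.lattice := fun n ↦ by
      simpa using nsmul_mem hw n
    let g : ℕ → q.roots.toFinset := fun n ↦ ⟨L.weierstrassP (α * (z₀ + n * w)), by
      rw [Multiset.mem_toFinset, Polynomial.mem_roots hq0, Polynomial.IsRoot, hq,
        Polynomial.eval_finsetSum]
      have hz : z₀ + n * w ∉ L.lattice := fun h ↦ h1 (by simpa using sub_mem h (hnw n))
      rw [← hcon (z₀ + n * w) hz (h2' _ (hnw n))]
      refine Finset.sum_congr rfl fun b _ ↦ ?_
      have := L.weierstrassP_add_coe z₀ ⟨n * w, hnw n⟩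
      simp only at this
      simp only [mono, this, Polynomial.eval_mul, Polynomial.eval_C, Polynomial.eval_pow,
        Polynomial.eval_X]
      ring⟩
    obtain ⟨a, b, hab, he⟩ := Finite.exists_ne_map_eq_of_infinite g
    have he' : L.weierstrassP (α * (z₀ + a * w)) = L.weierstrassP (α * (z₀ + b * w)) :=
      congr_arg Subtype.val he
    rcases mem_of_wp_eq L (h2' _ (hnw a)) (h2' _ (hnw b)) he' with h | h
    · refine ⟨(a : ℤ) - b, by omega, ?_⟩
      convert h using 1
      push_cast; ring
    · exfalso
      refine h3' _ (hnw (a + b)) ?_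
      convert h using 1
      push_cast; ring
  obtain ⟨m₁, hm₁, h₁⟩ := key L.ω₁ L.ω₁_mem_lattice
  obtain ⟨m₂, hm₂, h₂⟩ := key L.ω₂ L.ω₂_mem_lattice
  refine hα ⟨m₁ * m₂, mul_ne_zero hm₁ hm₂, ?_⟩
  rw [coe_lattice]
  intro w hw
  obtain ⟨a, b, rfl⟩ := mem_lattice.1 hw
  have := add_mem (zsmul_mem h₁ (m₂ * a)) (zsmul_mem h₂ (m₁ * b))
  rw [SetLike.mem_coe]
  convert this using 1
  simp only [zsmul_eq_mul]
  push_cast; ring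

/-- The domain on which both `℘(z)` and `℘(αz)` are holomorphic. -/
def dom (α : ℂ) : Set ℂ := {z | z ∉ L.lattice ∧ α * z ∉ L.lattice}

variable {L} in
lemma analyticAt_wp_mul {α z : ℂ} (hz : α * z ∉ L.lattice) :
    AnalyticAt ℂ (fun z ↦ L.weierstrassP (α * z)) z :=
  (analyticAt_wp L hz).comp (f := fun z ↦ α * z) (by fun_prop)

variable {L} in
lemma analyticAt_mono {α z : ℂ} (hz : z ∈ dom L α) {n : ℕ} (b : Fin n × Fin n) :
    AnalyticAt ℂ (mono L α b) z :=
  ((analyticAt_wp L hz.1).pow _).mul ((analyticAt_wp_mul hz.2).pow _)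

variable {L} in
lemma analyticAt_sum {α z : ℂ} (hz : z ∈ dom L α) {n : ℕ} (x : Fin n × Fin n → ℂ) :
    AnalyticAt ℂ (fun z ↦ ∑ b, x b * mono L α b z) z :=
  Finset.analyticAt_fun_sum _ fun b _ ↦ analyticAt_const.mul (analyticAt_mono hz b)

lemma isPreconnected_dom {α : ℂ} (hα : α ≠ 0) : IsPreconnected (dom L α) := by
  have := isPreconnected_compl_of_countable ((countable_lattice L).union
    ((countable_lattice L).image (fun v ↦ α⁻¹ * v)))
  convert this using 1
  ext z
  simp only [dom, Set.mem_ofPred_eq, Set.mem_compl_iff, Set.mem_union, not_or, Set.mem_image,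
    SetLike.mem_coe, not_exists, not_and]
  refine and_congr_right fun _ ↦ ⟨fun hz v hv hvz ↦ hz ?_, fun hz hv ↦ hz _ hv ?_⟩
  · rwa [← hvz, mul_inv_cancel_left₀ hα]
  · rw [inv_mul_cancel_left₀ hα]

/-- The auxiliary function does not vanish identically near any point, by analytic continuation. -/
lemma analyticOrderAt_ne_top {α : ℂ} (hα : α ∉ endQ L.ω₁ L.ω₂) {n : ℕ} (x : Fin n × Fin n → ℂ)
    (hx : x ≠ 0) {w : ℂ} (hw : w ∈ dom L α) :
    analyticOrderAt (fun z ↦ ∑ b, x b * mono L α b z) w ≠ ⊤ := by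
  intro h
  have hα0 : α ≠ 0 := by
    rintro rfl
    exact hα ⟨1, one_ne_zero, fun w _ ↦ by rw [coe_lattice]; simp⟩
  rw [analyticOrderAt_eq_top] at h
  obtain ⟨z, h1, h2, h3⟩ := exists_ne_zero L α hα x hx
  exact h3 (AnalyticOnNhd.eqOn_zero_of_preconnected_of_eventuallyEq_zero (𝕜 := ℂ)
    (fun z hz ↦ analyticAt_sum hz x) (isPreconnected_dom L hα0) hw h ⟨h1, h2⟩)

end Independence

/-! ### Extrapolation by the maximum modulus principle -/

section Growth

/-- A zero of order at least `s` of an entire function can be divided out. -/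
lemma exists_entire_div_pow {G : ℂ → ℂ} (hG : Differentiable ℂ G) {w : ℂ} {s : ℕ}
    (h : (s : ℕ∞) ≤ analyticOrderAt G w) :
    ∃ H : ℂ → ℂ, Differentiable ℂ H ∧ ∀ z, G z = (z - w) ^ s * H z := by
  obtain ⟨g, hg, hgG⟩ := (natCast_le_analyticOrderAt (hG.analyticAt w)).1 h
  have hmain : ∀ z, G z = (z - w) ^ s * (if z = w then g w else G z / (z - w) ^ s) := by
    intro z
    split_ifs with hz
    · subst hz; simpa using hgG.self_of_nhds
    · rw [mul_div_cancel₀]; exact pow_ne_zero _ (sub_ne_zero.2 hz)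
  refine ⟨fun z ↦ if z = w then g w else G z / (z - w) ^ s, fun z ↦ ?_, hmain⟩
  by_cases hz : z = w
  · subst hz
    refine hg.differentiableAt.congr_of_eventuallyEq ?_
    filter_upwards [hgG] with y hy
    split_ifs with hyz
    · rw [hyz]
    · rw [hy, smul_eq_mul, mul_div_cancel_left₀]; exact pow_ne_zero _ (sub_ne_zero.2 hyz)
  · have : DifferentiableAt ℂ (fun z ↦ G z / (z - w) ^ s) z :=
      (hG z).div (by fun_prop) (pow_ne_zero _ (sub_ne_zero.2 hz))
    refine this.congr_of_eventuallyEq ?_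
    filter_upwards [isOpen_ne.mem_nhds hz] with y hy
    rw [if_neg hy]

/-- An entire function with zeros of order at least `s` on a finite set `W` is divisible by
`∏ (z - w)^s`. -/
lemma exists_entire_div_prod (W : Finset ℂ) {G : ℂ → ℂ} (hG : Differentiable ℂ G) {s : ℕ}
    (h : ∀ w ∈ W, (s : ℕ∞) ≤ analyticOrderAt G w) :
    ∃ H : ℂ → ℂ, Differentiable ℂ H ∧ ∀ z, G z = (∏ w ∈ W, (z - w) ^ s) * H z := by
  classical
  induction W using Finset.induction_on with
  | empty => exact ⟨G, hG, by simp⟩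
  | insert w W hw ih =>
    obtain ⟨H, hH, hGH⟩ := ih fun v hv ↦ h v (Finset.mem_insert_of_mem hv)
    have hPd : Differentiable ℂ fun z : ℂ ↦ ∏ v ∈ W, (z - v) ^ s := by fun_prop
    have hP0 : analyticOrderAt (fun z : ℂ ↦ ∏ v ∈ W, (z - v) ^ s) w = 0 := by
      rw [(hPd.analyticAt w).analyticOrderAt_eq_zero, Finset.prod_ne_zero_iff]
      intro v hv
      refine pow_ne_zero _ (sub_ne_zero.2 ?_)
      rintro rfl; exact hw hv
    have hord : analyticOrderAt G w = analyticOrderAt H w := by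
      have : G = (fun z : ℂ ↦ ∏ v ∈ W, (z - v) ^ s) * H := funext hGH
      rw [this, analyticOrderAt_mul (hPd.analyticAt w) (hH.analyticAt w), hP0, zero_add]
    obtain ⟨H', hH', hHH'⟩ := exists_entire_div_pow hH (hord ▸ h w (Finset.mem_insert_self _ _))
    refine ⟨H', hH', fun z ↦ ?_⟩
    rw [hGH, hHH', Finset.prod_insert hw]; ring

variable (L : PeriodPair)

lemma isOpen_dom (α : ℂ) : IsOpen (dom L α) := by
  have h1 : IsOpen (L.lattice : Set ℂ)ᶜ := L.isClosed_lattice.isOpen_compl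
  exact h1.inter (h1.preimage (f := fun z ↦ α * z) (by fun_prop))

/-- Clearing denominators in a polynomial in `℘(z)`, `℘(αz)`: for `℘ = Q / S`, multiplication by the
`n`-th power of `U(z) = S(z) S(αz)` makes it entire, of order at most `3`. -/
lemma exists_entire_clear (α : ℂ) : ∃ (U : ℂ → ℂ) (C : ℝ), Differentiable ℂ U ∧ 0 < C ∧
    (∀ z ∈ dom L α, U z ≠ 0) ∧
    ∀ (n : ℕ) (x : Fin n × Fin n → ℂ) (X : ℝ), (∀ b, ‖x b‖ ≤ X) → ∃ G : ℂ → ℂ,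
      Differentiable ℂ G ∧ (∀ z ∈ dom L α, G z = U z ^ n * ∑ b, x b * mono L α b z) ∧
      ∀ R : ℝ, 1 ≤ R → ∀ z, ‖z‖ ≤ R → ‖G z‖ ≤ n ^ 2 * X * Real.exp (C * n * R ^ 3) := by
  obtain ⟨S, Q, hS, hQ, hS0, hSQ, C, hC, hb⟩ := exists_entire_quotient L
  have hcomp : ∀ f : ℂ → ℂ, Differentiable ℂ f → Differentiable ℂ fun z ↦ f (α * z) :=
    fun f hf ↦ hf.comp (by fun_prop)
  have hSα := hcomp S hS
  have hQα := hcomp Q hQ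
  refine ⟨fun z ↦ S z * S (α * z), 16 * C * (1 + ‖α‖) ^ 3, hS.mul hSα, by positivity,
    fun z hz ↦ mul_ne_zero (hS0 z hz.1) (hS0 _ hz.2), fun n x X hx ↦ ⟨fun z ↦ ∑ b : Fin n × Fin n,
      x b * ((S z ^ (n - b.1 : ℕ) * Q z ^ (b.1 : ℕ)) *
        (S (α * z) ^ (n - b.2 : ℕ) * Q (α * z) ^ (b.2 : ℕ))), by fun_prop, fun z hz ↦ ?_,
        fun R hR z hz ↦ ?_⟩⟩
  · rw [Finset.mul_sum]
    refine Finset.sum_congr rfl fun b _ ↦ ?_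
    have e1 : S z ^ n = S z ^ (n - b.1 : ℕ) * S z ^ (b.1 : ℕ) := by
      rw [← pow_add, Nat.sub_add_cancel b.1.2.le]
    have e2 : S (α * z) ^ n = S (α * z) ^ (n - b.2 : ℕ) * S (α * z) ^ (b.2 : ℕ) := by
      rw [← pow_add, Nat.sub_add_cancel b.2.2.le]
    rw [mul_pow, e1, e2, ← hSQ z hz.1, ← hSQ _ hz.2, mono, mul_pow, mul_pow]
    ring
  · have hR0 : 0 ≤ R := by linarith
    have hα0 := norm_nonneg α
    have key : ∀ y, ‖y‖ ≤ (1 + ‖α‖) * R → ∀ i : Fin n, ‖S y ^ (n - i : ℕ) * Q y ^ (i : ℕ)‖ ≤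
        Real.exp (8 * C * (1 + ‖α‖) ^ 3 * n * R ^ 3) := by
      intro y hy i
      have hE : Real.exp (C * (1 + ‖y‖) ^ 3) ≤ Real.exp (8 * C * (1 + ‖α‖) ^ 3 * R ^ 3) := by
        refine Real.exp_le_exp.2 ?_
        have : 1 + ‖y‖ ≤ 2 * ((1 + ‖α‖) * R) := by nlinarith
        calc C * (1 + ‖y‖) ^ 3 ≤ C * (2 * ((1 + ‖α‖) * R)) ^ 3 := by gcongr
          _ = _ := by ring
      rw [norm_mul, norm_pow, norm_pow]
      calc ‖S y‖ ^ (n - i : ℕ) * ‖Q y‖ ^ (i : ℕ)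
          ≤ Real.exp (8 * C * (1 + ‖α‖) ^ 3 * R ^ 3) ^ (n - i : ℕ) *
            Real.exp (8 * C * (1 + ‖α‖) ^ 3 * R ^ 3) ^ (i : ℕ) := by
            gcongr
            · exact (hb y).1.trans hE
            · exact (hb y).2.trans hE
        _ = Real.exp (8 * C * (1 + ‖α‖) ^ 3 * R ^ 3) ^ n := by
            rw [← pow_add, Nat.sub_add_cancel i.2.le]
        _ = _ := by rw [← Real.exp_nat_mul]; congr 1; ring
    have k1 := key z (by nlinarith)
    have k2 := key (α * z) (by rw [norm_mul]; nlinarith [norm_nonneg z])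
    refine (norm_sum_le _ _).trans ?_
    have : ∀ b ∈ (Finset.univ : Finset (Fin n × Fin n)),
        ‖x b * ((S z ^ (n - b.1 : ℕ) * Q z ^ (b.1 : ℕ)) *
        (S (α * z) ^ (n - b.2 : ℕ) * Q (α * z) ^ (b.2 : ℕ)))‖ ≤
        X * Real.exp (16 * C * (1 + ‖α‖) ^ 3 * n * R ^ 3) := fun b _ ↦ by
      rw [norm_mul, norm_mul (_ * _)]
      have hX : 0 ≤ X := (norm_nonneg _).trans (hx b)
      calc _ ≤ X * (Real.exp (8 * C * (1 + ‖α‖) ^ 3 * n * R ^ 3) *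
            Real.exp (8 * C * (1 + ‖α‖) ^ 3 * n * R ^ 3)) := by
            gcongr
            exacts [hx b, k1 _, k2 _]
        _ = _ := by rw [← Real.exp_add]; congr 2; ring
    refine (Finset.sum_le_card_nsmul _ _ _ this).trans_eq ?_
    simp [Finset.card_univ]
    ring

/-- The extrapolation step. If a polynomial in `℘(z)`, `℘(αz)` of degree `n ≪ √s` in each variable
vanishes to order `s` on `W`, then its `s`-th derivatives on `W` are small. The bound comes from
the maximum modulus principle on a disc of radius proportional to `s^{1/6}`. -/
lemma extrapolation (α : ℂ) (W : Finset ℂ) (hW : ∀ w ∈ W, w ∈ dom L α) (κ : ℝ) (hκ : 0 ≤ κ) :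
    ∃ C : ℝ, 0 ≤ C ∧ ∀ (n s : ℕ) (x : Fin n × Fin n → ℂ) (X : ℝ), 0 ≤ X → 1 ≤ s →
      (n : ℝ) ^ 2 ≤ κ * s → (∀ b, ‖x b‖ ≤ X) →
      (∀ w ∈ W, ∀ k < s, iteratedDeriv k (fun z ↦ ∑ b, x b * mono L α b z) w = 0) → ∀ w ∈ W,
      ‖iteratedDeriv s (fun z ↦ ∑ b, x b * mono L α b z) w‖ ≤
        X * Real.exp (C * s + s * Real.log s - W.card / 6 * (s * Real.log s)) := by
  obtain ⟨U, C₀, hU, hC₀, hU0, hclear⟩ := exists_entire_clear L α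
  -- a common radius `ε` of small closed discs, and a bound for `1 / U` on them
  have hloc : ∀ w ∈ W, ∃ ε > 0, ε ≤ 1 ∧ Metric.closedBall w ε ⊆ dom L α ∧
      ∃ δ > 0, ∀ z ∈ Metric.closedBall w ε, δ ≤ ‖U z‖ := by
    intro w hw
    obtain ⟨ε, hε, hεd⟩ := Metric.nhds_basis_closedBall.mem_iff.1
      ((isOpen_dom L α).mem_nhds (hW w hw))
    have hsub : Metric.closedBall w (min ε 1) ⊆ Metric.closedBall w ε :=
      Metric.closedBall_subset_closedBall (min_le_left _ _)
    refine ⟨min ε 1, lt_min hε one_pos, min_le_right _ _, hsub.trans hεd, ?_⟩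
    obtain ⟨y, hy, hmin⟩ := (isCompact_closedBall w (min ε 1)).exists_isMinOn
      ⟨w, Metric.mem_closedBall_self (lt_min hε one_pos).le⟩
      (f := fun z ↦ ‖U z‖) hU.continuous.norm.continuousOn
    exact ⟨‖U y‖, norm_pos_iff.2 (hU0 y (hεd (hsub hy))), fun z hz ↦ hmin hz⟩
  choose! ε hε hε1 hεd δ hδ hδU using hloc
  obtain ⟨A, hA1, hA⟩ : ∃ A : ℝ, 1 ≤ A ∧ ∀ w ∈ W, (ε w)⁻¹ ≤ A ∧ (δ w)⁻¹ ≤ A ∧ ‖w‖ + 1 ≤ A := by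
    refine ⟨1 + ∑ w ∈ W, ((ε w)⁻¹ + (δ w)⁻¹ + (‖w‖ + 1)), ?_, fun w hw ↦ ?_⟩
    · have : 0 ≤ ∑ w ∈ W, ((ε w)⁻¹ + (δ w)⁻¹ + (‖w‖ + 1)) := Finset.sum_nonneg fun w hw ↦ by
        have := hε w hw; have := hδ w hw; positivity
      linarith
    · have h1 := Finset.single_le_sum (f := fun w ↦ (ε w)⁻¹ + (δ w)⁻¹ + (‖w‖ + 1))
        (fun w hw ↦ by have := hε w hw; have := hδ w hw; positivity) hw
      have h2 : 0 < (ε w)⁻¹ := by have := hε w hw; positivity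
      have h3 : 0 < (δ w)⁻¹ := by have := hδ w hw; positivity
      have h4 := norm_nonneg w
      refine ⟨?_, ?_, ?_⟩ <;> linarith
  refine ⟨Real.log A + κ * Real.log A + W.card * Real.log (2 * A) + κ +
    C₀ * (8 * A ^ 3) * (1 + κ), ?_, fun n s x X hX hs hn hx hvan w hw ↦ ?_⟩
  · have := Real.log_nonneg hA1
    have := Real.log_nonneg (x := 2 * A) (by linarith)
    positivity
  obtain ⟨G, hGd, hG, hGb⟩ := hclear n x X hx
  set F : ℂ → ℂ := fun z ↦ ∑ b, x b * mono L α b z with hF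
  have hord : ∀ v ∈ W, (s : ℕ∞) ≤ analyticOrderAt G v := by
    intro v hv
    have hFa : AnalyticAt ℂ F v := analyticAt_sum (hW v hv) x
    have h1 := (natCast_le_analyticOrderAt_iff_iteratedDeriv_eq_zero hFa).2 (hvan v hv)
    have h2 : G =ᶠ[𝓝 v] U ^ n * F := by
      filter_upwards [(isOpen_dom L α).mem_nhds (hW v hv)] with z hz using hG z hz
    rw [analyticOrderAt_congr h2, analyticOrderAt_mul ((hU.analyticAt v).pow n) hFa]
    exact h1.trans le_add_self
  obtain ⟨H, hHd, hGH⟩ := exists_entire_div_prod W hGd hord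
  have hs0 : (0:ℝ) < s := by exact_mod_cast hs
  have hs1 : (1:ℝ) ≤ s := by exact_mod_cast hs
  set ℓ := Real.log s with hℓ
  have hℓ0 : 0 ≤ ℓ := Real.log_nonneg hs1
  have hexpℓ : Real.exp ℓ = s := Real.exp_log hs0
  -- `R` is of size `s^{1/6}`: then `n R³ = O(s)`, while each factor `(z - w)^s` is at least
  -- `s^{s/6}` on the circle `|z| = R`
  set R : ℝ := 2 * A * Real.exp (ℓ / 6) with hR
  have he1 : 1 ≤ Real.exp (ℓ / 6) := Real.one_le_exp (by positivity)
  have hR1 : 2 * A ≤ R := by nlinarith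
  have hR3 : n * R ^ 3 ≤ 8 * A ^ 3 * ((1 + κ) * s) := by
    have e : R ^ 3 = 8 * A ^ 3 * Real.exp (ℓ / 2) := by
      rw [hR, mul_pow, ← Real.exp_nat_mul]
      congr 1
      · ring
      · congr 1; push_cast; ring
    have h2 : n * Real.exp (ℓ / 2) ≤ (1 + κ) * s := by
      refine le_of_sq_le_sq ?_ (by positivity)
      rw [mul_pow, ← Real.exp_nat_mul]
      have : ((2:ℕ):ℝ) * (ℓ / 2) = ℓ := by push_cast; ring
      rw [this, hexpℓ]
      nlinarith [mul_le_mul_of_nonneg_right hn hs0.le, mul_nonneg hκ (sq_nonneg (s:ℝ)),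
        mul_nonneg hκ (mul_nonneg hκ (sq_nonneg (s:ℝ))), sq_nonneg (s:ℝ)]
    rw [e]
    have hA3 : 0 ≤ 8 * A ^ 3 := by positivity
    nlinarith
  set B : ℝ := n ^ 2 * X * Real.exp (C₀ * n * R ^ 3) / (Real.exp (ℓ / 6) ^ s) ^ W.card with hB
  have hB0 : 0 ≤ B := by positivity
  -- maximum modulus principle for the quotient of `G` by `∏ (z - v)^s`
  have hHb : ∀ z, ‖z‖ ≤ R → ‖H z‖ ≤ B := by
    intro z hz
    refine norm_le_of_forall_mem_frontier_norm_le (U := Metric.ball 0 R) Metric.isBounded_ball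
      hHd.diffContOnCl (fun y hy ↦ ?_) (by
        rw [closure_ball _ (by positivity)]; simpa using hz)
    rw [frontier_ball _ (by positivity), mem_sphere_zero_iff_norm] at hy
    have h1 := hGb R (by linarith) y hy.le
    rw [hGH, norm_mul, norm_prod] at h1
    have h2 : (Real.exp (ℓ / 6) ^ s) ^ W.card ≤ ∏ v ∈ W, ‖(y - v) ^ s‖ := by
      rw [← Finset.prod_const]
      refine Finset.prod_le_prod (fun _ _ ↦ by positivity) fun v hv ↦ ?_
      rw [norm_pow]
      gcongr
      have := norm_sub_norm_le y v
      have h3 := (hA v hv).2.2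
      rw [hy] at this
      nlinarith
    rw [hB, le_div_iff₀ (by positivity), mul_comm]
    exact (mul_le_mul_of_nonneg_right h2 (norm_nonneg _)).trans h1
  have hball : ∀ z ∈ Metric.closedBall w (ε w), ‖F z‖ ≤ A ^ n * (((2 * A) ^ s) ^ W.card * B) := by
    intro z hz
    have hU1 := hδU w hw z hz
    have hUz : U z ≠ 0 := hU0 z (hεd w hw hz)
    have hzn : ‖z‖ ≤ A := by
      rw [mem_closedBall_iff_norm] at hz
      have := norm_add_le (z - w) w
      rw [sub_add_cancel] at this
      linarith [hε1 w hw, (hA w hw).2.2]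
    have e : F z = (U z ^ n)⁻¹ * ((∏ v ∈ W, (z - v) ^ s) * H z) := by
      rw [← hGH, hG z (hεd w hw hz), inv_mul_cancel_left₀ (pow_ne_zero _ hUz)]
    rw [e, norm_mul, norm_mul, norm_inv, norm_pow, norm_prod, ← inv_pow]
    have h1 : ‖U z‖⁻¹ ≤ A := by
      refine le_trans ?_ (hA w hw).2.1
      have := hδ w hw
      gcongr
    have h2 : ∏ v ∈ W, ‖(z - v) ^ s‖ ≤ ((2 * A) ^ s) ^ W.card := by
      rw [← Finset.prod_const]
      refine Finset.prod_le_prod (fun _ _ ↦ by positivity) fun v hv ↦ ?_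
      rw [norm_pow]
      gcongr
      have := norm_sub_le z v
      linarith [(hA v hv).2.2]
    gcongr
    exact hHb z (by linarith)
  have hFd : DiffContOnCl ℂ F (Metric.ball w (ε w)) := by
    refine DifferentiableOn.diffContOnCl ?_
    rw [closure_ball _ (hε w hw).ne']
    exact fun z hz ↦ (analyticAt_sum (hεd w hw hz) x).differentiableAt.differentiableWithinAt
  -- Cauchy estimate on the small disc around `w`
  have hfin := norm_iteratedDeriv_le_of_forall_mem_sphere_norm_le s (hε w hw) hFd
    fun z hz ↦ hball z (Metric.sphere_subset_closedBall hz)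
  refine hfin.trans ?_
  have hnn : (n:ℝ) ≤ n ^ 2 := by exact_mod_cast Nat.le_self_pow two_ne_zero n
  have hA0 : 0 < A := by linarith
  have hlogA := Real.log_nonneg hA1
  -- the individual factors as exponentials
  have f1 : (s.factorial : ℝ) ≤ Real.exp (s * ℓ) := by
    rw [Real.exp_nat_mul, hexpℓ]
    exact_mod_cast Nat.factorial_le_pow s
  have f2 : (ε w ^ s)⁻¹ ≤ Real.exp (s * Real.log A) := by
    rw [Real.exp_nat_mul, Real.exp_log hA0, ← inv_pow]
    have := hε w hw
    have := (hA w hw).1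
    gcongr
  have f3 : A ^ n ≤ Real.exp (κ * s * Real.log A) := by
    rw [← Real.exp_log (pow_pos hA0 n), Real.log_pow]
    refine Real.exp_le_exp.2 (mul_le_mul_of_nonneg_right ?_ hlogA)
    nlinarith
  have f4 : ((2 * A) ^ s) ^ W.card = Real.exp (s * W.card * Real.log (2 * A)) := by
    rw [← Real.exp_log (show 0 < ((2 * A) ^ s) ^ W.card by positivity), Real.log_pow, Real.log_pow]
    congr 1; ring
  have f5 : (n:ℝ) ^ 2 ≤ Real.exp (κ * s) := by linarith [Real.add_one_le_exp (κ * s)]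
  have f6 : Real.exp (C₀ * n * R ^ 3) ≤ Real.exp (C₀ * (8 * A ^ 3 * ((1 + κ) * s))) := by
    refine Real.exp_le_exp.2 ?_
    rw [mul_assoc]; gcongr
  have f7 : ((Real.exp (ℓ / 6) ^ s) ^ W.card)⁻¹ = Real.exp (-(W.card / 6 * (s * ℓ))) := by
    rw [← Real.exp_nat_mul, ← Real.exp_nat_mul, ← Real.exp_neg]
    congr 1; ring
  rw [hB, f4, div_eq_mul_inv, div_eq_mul_inv _ ((_ ^ s) ^ _), f7]
  calc _ ≤ Real.exp (s * ℓ) * (Real.exp (κ * s * Real.log A) *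
        (Real.exp (s * W.card * Real.log (2 * A)) * (Real.exp (κ * s) * X *
          Real.exp (C₀ * (8 * A ^ 3 * ((1 + κ) * s))) * Real.exp (-(W.card / 6 * (s * ℓ)))))) *
        Real.exp (s * Real.log A) := by
        have := hε w hw
        gcongr
    _ = X * (Real.exp (s * ℓ) * Real.exp (κ * s * Real.log A) *
        Real.exp (s * W.card * Real.log (2 * A)) * Real.exp (κ * s) *
          Real.exp (C₀ * (8 * A ^ 3 * ((1 + κ) * s))) * Real.exp (-(W.card / 6 * (s * ℓ))) *
        Real.exp (s * Real.log A)) := by ring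
    _ = _ := by
        simp only [← Real.exp_add]
        congr 2; ring

end Growth

/-! ### Arithmetic of the derivatives -/

section Jets
open NumberField
variable {K : Type*} [Field K] [NumberField K] (ι : K →+* ℂ)

/-- `Jet ι c r H w n f`: the derivatives of `f` at `w` have denominators dividing `c^(k+n)`, where
`k` is the order of the derivative, and after clearing them the exponential generating function
of their houses is at most `H^n` at `r`. -/
def Jet (c : ℕ) (r H : ℝ) (w : ℂ) (n : ℕ) (f : ℂ → ℂ) : Prop :=
  AnalyticAt ℂ f w ∧ ∃ b : ℕ → 𝓞 K, (∀ k, (c : ℂ) ^ (k + n) * iteratedDeriv k f w = ι (b k)) ∧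
    ∀ T, ∑ k ∈ Finset.range T, house (b k : K) * r ^ k / k.factorial ≤ H ^ n

variable {ι} {c : ℕ} {r H : ℝ} {w : ℂ}

/-- By the Leibniz rule the generating functions multiply, so the weights `n` add. -/
lemma Jet.mul {n m : ℕ} {f g : ℂ → ℂ} (hr : 0 ≤ r) (hf : Jet ι c r H w n f)
    (hg : Jet ι c r H w m g) : Jet ι c r H w (n + m) (fun z ↦ f z * g z) := by
  obtain ⟨hfa, b, hb, hbH⟩ := hf
  obtain ⟨hga, d, hd, hdH⟩ := hg
  refine ⟨hfa.mul hga, fun k ↦ ∑ i ∈ Finset.range (k + 1), (k.choose i : 𝓞 K) * b i * d (k - i),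
    fun k ↦ ?_, fun T ↦ ?_⟩
  · rw [iteratedDeriv_fun_mul hfa.contDiffAt hga.contDiffAt, Finset.mul_sum]
    push_cast
    rw [map_sum]
    refine Finset.sum_congr rfl fun i hi ↦ ?_
    have hik : i ≤ k := Nat.lt_succ_iff.1 (Finset.mem_range.1 hi)
    rw [map_mul, map_mul, ← hb, ← hd, map_natCast]
    have : k + (n + m) = (i + n) + (k - i + m) := by omega
    rw [this, pow_add]; ring
  · set u : ℕ → ℝ := fun k ↦ house (b k : K) * r ^ k / k.factorial with hu
    set v : ℕ → ℝ := fun k ↦ house (d k : K) * r ^ k / k.factorial with hv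
    have hu0 : ∀ k, 0 ≤ u k := fun k ↦ by have := house_nonneg (b k : K); positivity
    have hv0 : ∀ k, 0 ≤ v k := fun k ↦ by have := house_nonneg (d k : K); positivity
    have hterm : ∀ k, house ((∑ i ∈ Finset.range (k + 1), (k.choose i : 𝓞 K) * b i * d (k - i) :
        𝓞 K) : K) * r ^ k / k.factorial ≤ ∑ i ∈ Finset.range (k + 1), u i * v (k - i) := by
      intro k
      push_cast
      calc _ ≤ (∑ i ∈ Finset.range (k + 1), k.choose i * (house (b i : K) *
            house (d (k - i) : K))) * r ^ k / k.factorial := by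
            gcongr
            refine (house_sum_le_sum_house _ _).trans (Finset.sum_le_sum fun i _ ↦ ?_)
            rw [mul_assoc, house_nat_mul]
            gcongr
            exact house_mul_le _ _
        _ = _ := by
            rw [Finset.sum_mul, Finset.sum_div]
            refine Finset.sum_congr rfl fun i hi ↦ ?_
            have hik : i ≤ k := Nat.lt_succ_iff.1 (Finset.mem_range.1 hi)
            have e : r ^ k = r ^ i * r ^ (k - i) := by rw [← pow_add]; congr 1; omega
            rw [Nat.cast_choose ℝ hik, e, hu, hv]
            field_simp
    calc _ ≤ ∑ k ∈ Finset.range T, ∑ i ∈ Finset.range (k + 1), u i * v (k - i) :=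
          Finset.sum_le_sum fun k _ ↦ hterm k
      _ = ∑ i ∈ Finset.range T, ∑ j ∈ Finset.range (T - i), u i * v j :=
          Finset.sum_range_diag_flip _ fun i j ↦ u i * v j
      _ ≤ ∑ i ∈ Finset.range T, ∑ j ∈ Finset.range T, u i * v j := by
          refine Finset.sum_le_sum fun i _ ↦ Finset.sum_le_sum_of_subset_of_nonneg ?_
            fun j _ _ ↦ mul_nonneg (hu0 i) (hv0 j)
          exact Finset.range_subset_range.2 (Nat.sub_le _ _)
      _ = (∑ i ∈ Finset.range T, u i) * ∑ j ∈ Finset.range T, v j := by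
          rw [Finset.sum_mul_sum]
      _ ≤ H ^ n * H ^ m := mul_le_mul (hbH T) (hdH T) (Finset.sum_nonneg fun j _ ↦ hv0 j)
          ((Finset.sum_nonneg fun j _ ↦ hu0 j).trans (hbH T))
      _ = _ := (pow_add _ _ _).symm

lemma Jet.one (hH : 1 ≤ H) (hc : (c:ℝ) ≤ H) (n : ℕ) :
    Jet ι c r H w n (fun _ ↦ 1) := by
  refine ⟨analyticAt_const, fun k ↦ if k = 0 then (c : 𝓞 K) ^ n else 0, fun k ↦ ?_, fun T ↦ ?_⟩
  · rw [iteratedDeriv_const]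
    split_ifs with h <;> simp [h]
  · have hle : ∀ k ∈ Finset.range T, house ((if k = 0 then (c : 𝓞 K) ^ n else 0 : 𝓞 K) : K) * r ^ k /
        k.factorial ≤ if k = 0 then (H ^ n : ℝ) else 0 := by
      intro k _
      split_ifs with h
      · subst h
        push_cast
        simp only [pow_zero, mul_one, Nat.factorial_zero, Nat.cast_one, div_one]
        have e : house ((c : K)) = c := by simpa using house_intCast (K := K) (c : ℤ)
        refine (house_pow_le _ _).trans ?_
        rw [e]; gcongr
      · simp [house]
    refine (Finset.sum_le_sum hle).trans ?_
    rw [Finset.sum_ite_eq']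
    split_ifs
    · exact le_rfl
    · positivity

lemma Jet.pow {f : ℂ → ℂ} (hr : 0 ≤ r) (hH : 1 ≤ H) (hc : (c:ℝ) ≤ H) (hf : Jet ι c r H w 1 f)
    (n : ℕ) : Jet ι c r H w n (fun z ↦ f z ^ n) := by
  induction n with
  | zero => simpa using Jet.one hH hc 0
  | succ n ih => simpa only [pow_succ] using ih.mul hr hf

/-- A solution of the differential equation `f'' = 6βf² - γ` with algebraic data has controlled
derivatives: by induction on `k`, the house of `c^(k+1) f^(k)(w)` is at most `k! A^(k+1)`. -/
lemma Jet.of_ode {f : ℂ → ℂ} {β γ : ℂ} {A : ℝ} (hf : AnalyticAt ℂ f w)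
    (hode : deriv (deriv f) =ᶠ[𝓝 w] fun z ↦ 6 * β * (f z * f z) - γ) (y₀ y₁ B G : 𝓞 K)
    (h₀ : ι y₀ = c * f w) (h₁ : ι y₁ = c ^ 2 * deriv f w) (hB : ι B = c * β)
    (hG : ι G = c ^ 3 * γ) (hA1 : 1 ≤ A) (hA₀ : house (y₀ : K) ≤ A) (hA₁ : house (y₁ : K) ≤ A)
    (hAB : 3 * house (B : K) + house (G : K) ≤ A) : Jet ι c (1 / (2 * A)) (2 * A) w 1 f := by
  have hcoe : ∀ b s x : 𝓞 K, ((6 * b * s - x : 𝓞 K) : K) = 6 * (b : K) * (s : K) - (x : K) :=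
    fun b s x ↦ rfl
  have hmain : ∀ k, ∃ y : 𝓞 K, (c : ℂ) ^ (k + 1) * iteratedDeriv k f w = ι y ∧
      house (y : K) ≤ k.factorial * A ^ (k + 1) := by
    intro k
    induction k using Nat.strong_induction_on with
    | _ k ih =>
      match k, ih with
      | 0, _ => exact ⟨y₀, by simp [h₀], by simpa using hA₀⟩
      | 1, _ => exact ⟨y₁, by simp [h₁, iteratedDeriv_one], by
          simpa using hA₁.trans (le_self_pow₀ hA1 two_ne_zero)⟩
      | k + 2, ih =>
        have ih' : ∀ i : ℕ, ∃ y : 𝓞 K, i < k + 2 → (c : ℂ) ^ (i + 1) * iteratedDeriv i f w = ι y ∧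
            house (y : K) ≤ i.factorial * A ^ (i + 1) := by
          intro i
          by_cases hi : i < k + 2
          · obtain ⟨y, hy⟩ := ih i hi; exact ⟨y, fun _ ↦ hy⟩
          · exact ⟨0, fun h ↦ absurd h hi⟩
        choose y hy using ih'
        refine ⟨6 * B * ∑ i ∈ Finset.range (k + 1), (k.choose i : 𝓞 K) * y i * y (k - i) -
          (if k = 0 then G else 0), ?_, ?_⟩
        · have e1 : iteratedDeriv (k + 2) f w = 6 * β * ∑ i ∈ Finset.range (k + 1),
              (k.choose i : ℂ) * iteratedDeriv i f w * iteratedDeriv (k - i) f w -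
              if k = 0 then γ else 0 := by
            rw [iteratedDeriv_succ', iteratedDeriv_succ', hode.iteratedDeriv_eq,
              iteratedDeriv_fun_sub, iteratedDeriv_const, iteratedDeriv_const_mul_field,
              iteratedDeriv_fun_mul hf.contDiffAt hf.contDiffAt]
            · exact (analyticAt_const.mul (hf.mul hf)).contDiffAt
            · exact contDiffAt_const
          have e2 : ι ((if k = 0 then G else 0 : 𝓞 K) : K) = c ^ (k + 3) * if k = 0 then γ else 0 := by
            split_ifs with h
            · rw [h, hG]
            · simp
          rw [e1, hcoe]
          push_cast
          rw [map_sub, e2, map_mul, map_mul, hB, map_sum, mul_sub]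
          congr 1
          rw [← mul_assoc, Finset.mul_sum, Finset.mul_sum]
          refine Finset.sum_congr rfl fun i hi ↦ ?_
          have hik : i ≤ k := Nat.lt_succ_iff.1 (Finset.mem_range.1 hi)
          rw [map_mul, map_mul, ← (hy i (by omega)).1, ← (hy (k - i) (by omega)).1, map_natCast,
            map_ofNat]
          have : k + 2 + 1 = (i + 1) + (k - i + 1) + 1 := by omega
          rw [this, pow_add, pow_add]; ring
        · have hBn := house_nonneg (B : K)
          have hGn := house_nonneg (G : K)
          have hA0 : 0 ≤ A := by linarith
          have s1 : house ((∑ i ∈ Finset.range (k + 1), (k.choose i : 𝓞 K) * y i * y (k - i) :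
              𝓞 K) : K) ≤ (k + 1).factorial * A ^ (k + 2) := by
            push_cast
            refine (house_sum_le_sum_house _ _).trans ?_
            have : ∀ i ∈ Finset.range (k + 1), house ((k.choose i : K) * (y i : K) * (y (k - i) : K)) ≤
                k.factorial * A ^ (k + 2) := by
              intro i hi
              have hik : i ≤ k := Nat.lt_succ_iff.1 (Finset.mem_range.1 hi)
              rw [mul_assoc, house_nat_mul]
              calc _ ≤ (k.choose i : ℝ) * ((i.factorial * A ^ (i + 1)) *
                    ((k - i).factorial * A ^ (k - i + 1))) := by
                    gcongr
                    refine (house_mul_le _ _).trans ?_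
                    exact mul_le_mul (hy i (by omega)).2 (hy (k - i) (by omega)).2
                      (house_nonneg _) (by positivity)
                _ = _ := by
                    have : k + 2 = (i + 1) + (k - i + 1) := by omega
                    rw [this, pow_add A (i + 1), ← Nat.choose_mul_factorial_mul_factorial hik]
                    push_cast; ring
            refine (Finset.sum_le_card_nsmul _ _ _ this).trans_eq ?_
            rw [Finset.card_range, nsmul_eq_mul, Nat.factorial_succ]; push_cast; ring
          have s2 : house ((if k = 0 then G else 0 : 𝓞 K) : K) ≤ house (G : K) := by
            split_ifs
            · exact le_rfl
            · simp [house]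
          have s3 : ∀ a b : K, house (a - b) ≤ house a + house b := by
            intro a b
            simp only [house, map_sub]; exact norm_sub_le _ _
          have hS := house_nonneg ((∑ i ∈ Finset.range (k + 1), (k.choose i : 𝓞 K) * y i * y (k - i) :
              𝓞 K) : K)
          set S := ∑ i ∈ Finset.range (k + 1), (k.choose i : 𝓞 K) * y i * y (k - i)
          have hf2 : (((k + 2).factorial : ℕ) : ℝ) = (k + 2) * (k + 1).factorial := by
            rw [Nat.factorial_succ (k + 1)]; push_cast; ring
          have hf1 : (1 : ℝ) ≤ (k + 2).factorial := by exact_mod_cast Nat.factorial_pos _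
          have hAk : 1 ≤ A ^ (k + 2) := one_le_pow₀ hA1
          have hP : (0 : ℝ) ≤ (k + 1).factorial * A ^ (k + 2) := by positivity
          calc house ((6 * B * S - (if k = 0 then G else 0) : 𝓞 K) : K)
              ≤ 6 * (house (B : K) * house (S : K)) + house (G : K) := by
                rw [hcoe]
                refine (s3 _ _).trans (add_le_add ?_ s2)
                have := house_nat_mul ((B : K) * (S : K)) 6
                push_cast at this
                rw [mul_assoc, this]
                gcongr
                exact house_mul_le _ _
            _ ≤ 6 * (house (B : K) * ((k + 1).factorial * A ^ (k + 2))) + house (G : K) := by gcongr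
            _ ≤ (k + 2).factorial * A ^ (k + 2) * (3 * house (B : K)) +
                (k + 2).factorial * A ^ (k + 2) * house (G : K) := by
                refine add_le_add ?_ ?_
                · rw [hf2]
                  have : (0:ℝ) ≤ k := Nat.cast_nonneg k
                  nlinarith [mul_nonneg this (mul_nonneg hBn hP)]
                · exact le_mul_of_one_le_left hGn (one_le_mul_of_one_le_of_one_le hf1 hAk)
            _ = (k + 2).factorial * A ^ (k + 2) * (3 * house (B : K) + house (G : K)) := by ring
            _ ≤ (k + 2).factorial * A ^ (k + 2) * A := by gcongr
            _ = _ := by rw [pow_succ A (k + 2)]; ring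
  choose b hb hbA using hmain
  refine ⟨hf, b, hb, fun T ↦ ?_⟩
  have hA0 : 0 < A := by linarith
  have : ∀ k ∈ Finset.range T, house (b k : K) * (1 / (2 * A)) ^ k / k.factorial ≤
      A * (1 / 2) ^ k := by
    intro k _
    rw [div_le_iff₀ (by positivity)]
    calc _ ≤ k.factorial * A ^ (k + 1) * (1 / (2 * A)) ^ k := by gcongr; exact hbA k
      _ = _ := by
        have : A ^ k * (1 / (2 * A)) ^ k = (1 / 2) ^ k := by
          rw [← mul_pow]; congr 1; field_simp
        rw [← this]; ring
  refine (Finset.sum_le_sum this).trans ?_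
  rw [← Finset.mul_sum, pow_one, mul_comm 2 A]
  gcongr
  have := sum_geometric_two_le T
  simpa using this

/-- A single term of the generating function bounds a single derivative. -/
lemma Jet.house_le {n : ℕ} {f : ℂ → ℂ} (hr : 0 < r) (hf : Jet ι c r H w n f) : ∃ b : ℕ → 𝓞 K,
    (∀ k, (c : ℂ) ^ (k + n) * iteratedDeriv k f w = ι (b k)) ∧
    ∀ k, house (b k : K) ≤ k.factorial * r⁻¹ ^ k * H ^ n := by
  obtain ⟨-, b, hb, hbH⟩ := hf
  refine ⟨b, hb, fun k ↦ ?_⟩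
  have h := (Finset.single_le_sum (f := fun k ↦ house (b k : K) * r ^ k / k.factorial)
    (fun k _ ↦ by have := house_nonneg (b k : K); positivity)
    (Finset.self_mem_range_succ k)).trans (hbH (k + 1))
  rw [div_le_iff₀ (by positivity)] at h
  calc house (b k : K) = house (b k : K) * r ^ k * r⁻¹ ^ k := by
        rw [mul_assoc, ← mul_pow, mul_inv_cancel₀ hr.ne', one_pow, mul_one]
    _ ≤ H ^ n * k.factorial * r⁻¹ ^ k := by gcongr
    _ = _ := by ring

end Jets

/-! ### The lemmas of Siegel and Liouville -/

section Siegel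
open NumberField

/-- Siegel's lemma over a number field, for twice as many unknowns as equations, so that the
exponent in the bound is `1`. The zero matrix is included. -/
lemma siegel (K : Type*) [Field K] [NumberField K] : ∃ c₁ : ℝ, 1 ≤ c₁ ∧
    ∀ (m n : Type) [Fintype m] [Fintype n] (a : Matrix m n (𝓞 K)) (A : ℝ), 0 < Fintype.card m →
      Fintype.card n = 2 * Fintype.card m → 1 ≤ A → (∀ i j, house (a i j : K) ≤ A) →
      ∃ ξ : n → 𝓞 K, ξ ≠ 0 ∧ a.mulVec ξ = 0 ∧
        ∀ j, house (ξ j : K) ≤ c₁ * Fintype.card n * A := by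
  classical
  obtain ⟨c, hc⟩ : ∃ c : ℝ, ∀ (m n : Type) [Fintype m] [Fintype n] (a : Matrix m n (𝓞 K)) (A : ℝ),
      0 < Fintype.card m → Fintype.card n = 2 * Fintype.card m → a ≠ 0 →
      (∀ i j, house (a i j : K) ≤ A) → ∃ ξ : n → 𝓞 K, ξ ≠ 0 ∧ a.mulVec ξ = 0 ∧
        ∀ j, house (ξ j : K) ≤ c * (c * Fintype.card n * A) := by
    refine ⟨?_, fun m n _ _ a A hm hmn ha hA ↦ ?_⟩
    rotate_left
    · obtain ⟨ξ, h0, h1, h2⟩ := house.exists_ne_zero_int_vec_house_le K a ha hm (by omega) rfl hA rfl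
      refine ⟨ξ, h0, h1, fun l ↦ (h2 l).trans_eq ?_⟩
      have : (Fintype.card m : ℝ) / (Fintype.card n - Fintype.card m) = 1 := by
        have : (0:ℝ) < Fintype.card m := by exact_mod_cast hm
        rw [hmn]; push_cast; rw [div_eq_one_iff_eq] <;> linarith
      rw [this, Real.rpow_one]
  refine ⟨max 1 (c * c), le_max_left _ _, fun m n _ _ a A hm hmn hA1 hA ↦ ?_⟩
  have hn : (1:ℝ) ≤ Fintype.card n := by exact_mod_cast (by omega : 1 ≤ Fintype.card n)
  by_cases ha : a = 0
  · have : Nonempty n := Fintype.card_pos_iff.1 (by omega)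
    refine ⟨1, one_ne_zero, by rw [ha, Matrix.zero_mulVec], fun j ↦ ?_⟩
    have e : house ((1 : K)) = 1 := by simpa using house_intCast (K := K) 1
    rw [Pi.one_apply]
    change house (1 : K) ≤ _
    rw [e]
    exact one_le_mul_of_one_le_of_one_le (one_le_mul_of_one_le_of_one_le (le_max_left _ _) hn) hA1
  · obtain ⟨ξ, h0, h1, h2⟩ := hc m n a A hm hmn ha hA
    refine ⟨ξ, h0, h1, fun j ↦ (h2 j).trans ?_⟩
    rw [← mul_assoc, ← mul_assoc]
    gcongr
    exact le_max_right _ _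

/-- Liouville's inequality for algebraic integers: the norm of `y` is a nonzero integer. -/
lemma liouville {K : Type*} [Field K] [NumberField K] (ι : K →+* ℂ) (y : 𝓞 K) (hy : y ≠ 0) :
    1 ≤ ‖ι y‖ * house (y : K) ^ (Module.finrank ℚ K - 1) := by
  refine le_trans ?_ (norm_norm_le_norm_mul_house_pow (y : K) ι)
  have hi : IsIntegral ℤ (Algebra.norm ℚ (y : K)) := Algebra.isIntegral_norm ℚ y.isIntegral_coe
  obtain ⟨m, hm⟩ := IsIntegrallyClosed.isIntegral_iff.1 hi
  have hm0 : m ≠ 0 := by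
    rintro rfl
    rw [map_zero, eq_comm, Algebra.norm_eq_zero_iff] at hm
    exact hy (RingOfIntegers.coe_eq_zero_iff.1 hm)
  rw [← hm]
  have : (1:ℝ) ≤ |(m:ℝ)| := by exact_mod_cast Int.one_le_abs hm0
  simpa [Rat.norm_cast_real, Int.norm_eq_abs] using this

end Siegel

/-! ### The auxiliary function and the contradiction -/

section Core
open NumberField
variable {K : Type*} [Field K] [NumberField K] (ι : K →+* ℂ) (L : PeriodPair)

/-- Finitely many elements of the number field have a common denominator. -/
lemma exists_common_denominator (S : Finset ℂ) (hS : ∀ x ∈ S, x ∈ ι.fieldRange) :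
    ∃ c : ℕ, 1 ≤ c ∧ ∀ x ∈ S, ∃ y : 𝓞 K, ι y = c * x := by
  classical
  choose! φ hφ using hS
  obtain ⟨m, hm, h⟩ := exists_integral_multiples ℤ ℚ (S.image φ)
  refine ⟨m.natAbs, Int.one_le_abs hm |> fun h ↦ by omega, fun x hx ↦ ?_⟩
  have hi := h (φ x) (Finset.mem_image_of_mem _ hx)
  have hi' : IsIntegral ℤ ((m.natAbs : K) * φ x) := by
    rcases Int.natAbs_eq m with e | e
    · rw [e] at hi; simpa using hi
    · rw [e] at hi; simpa using hi.neg
  exact ⟨⟨_, hi'⟩, by simp [RingOfIntegers.map_mk, hφ x hx]⟩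

variable {ι} in
lemma Jet.of_ode_eventually {c : ℕ} {w : ℂ} {f : ℂ → ℂ} {β γ : ℂ} (hf : AnalyticAt ℂ f w)
    (hode : deriv (deriv f) =ᶠ[𝓝 w] fun z ↦ 6 * β * (f z * f z) - γ)
    (h₀ : ∃ y : 𝓞 K, ι y = c * f w) (h₁ : ∃ y : 𝓞 K, ι y = c * deriv f w)
    (hB : ∃ y : 𝓞 K, ι y = c * β) (hG : ∃ y : 𝓞 K, ι y = c * γ) :
    ∀ᶠ A : ℝ in atTop, Jet ι c (1 / (2 * A)) (2 * A) w 1 f := by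
  obtain ⟨y₀, h₀⟩ := h₀
  obtain ⟨y₁, h₁⟩ := h₁
  obtain ⟨B, hB⟩ := hB
  obtain ⟨G, hG⟩ := hG
  filter_upwards [eventually_ge_atTop 1, eventually_ge_atTop (house (y₀ : K)),
    eventually_ge_atTop (house ((c * y₁ : 𝓞 K) : K)),
    eventually_ge_atTop (3 * house (B : K) + house ((c ^ 2 * G : 𝓞 K) : K))] with A a1 a2 a3 a4
  refine Jet.of_ode hf hode y₀ (c * y₁) B (c ^ 2 * G) h₀ ?_ hB ?_ a1 a2 a3 a4
  · push_cast; rw [map_mul, h₁, map_natCast]; ring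
  · push_cast; rw [map_mul, hG, map_pow, map_natCast]; ring

lemma deriv_deriv_wp {w : ℂ} (hw : w ∉ L.lattice) : deriv (deriv L.weierstrassP) =ᶠ[𝓝 w]
    fun z ↦ 6 * 1 * (L.weierstrassP z * L.weierstrassP z) - L.g₂ / 2 := by
  have h1 : ∀ z ∉ L.lattice, deriv L.weierstrassP =ᶠ[𝓝 z] L.derivWeierstrassP := fun z hz ↦ by
    filter_upwards [eventually_notMem L hz] with v hv using (hasDerivAt_wp L hv).deriv
  filter_upwards [eventually_notMem L hw] with z hz
  rw [(h1 z hz).deriv_eq, (hasDerivAt_wp' L hz).deriv]; ring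

lemma hasDerivAt_wp_mul {α w : ℂ} (hw : α * w ∉ L.lattice) :
    HasDerivAt (fun z ↦ L.weierstrassP (α * z)) (α * L.derivWeierstrassP (α * w)) w := by
  have := (hasDerivAt_wp L hw).comp w ((hasDerivAt_id w).const_mul α)
  rw [mul_one, mul_comm] at this
  exact this

lemma deriv_deriv_wp_mul {α w : ℂ} (hw : α * w ∉ L.lattice) :
    deriv (deriv fun z ↦ L.weierstrassP (α * z)) =ᶠ[𝓝 w] fun z ↦ 6 * α ^ 2 *
      (L.weierstrassP (α * z) * L.weierstrassP (α * z)) - α ^ 2 * (L.g₂ / 2) := by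
  have h0 : ∀ z, α * z ∉ L.lattice → ∀ᶠ v in 𝓝 z, α * v ∉ L.lattice := fun z hz ↦
    (show Continuous fun v : ℂ ↦ α * v by fun_prop).continuousAt.eventually (eventually_notMem L hz)
  have h1 : ∀ z, α * z ∉ L.lattice → deriv (fun z ↦ L.weierstrassP (α * z)) =ᶠ[𝓝 z]
      fun z ↦ α * L.derivWeierstrassP (α * z) := fun z hz ↦ by
    filter_upwards [h0 z hz] with v hv using (hasDerivAt_wp_mul L hv).deriv
  filter_upwards [h0 w hw] with z hz
  rw [(h1 z hz).deriv_eq]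
  have := ((hasDerivAt_wp' L hz).comp z ((hasDerivAt_id z).const_mul α)).const_mul α
  refine (this.deriv : _).trans ?_
  ring

/-- All monomials `℘(z)^i ℘(αz)^j` with `i, j < n` have controlled derivatives at the points
of `W`. -/
lemma exists_jets (α : ℂ) (W : Finset ℂ) (hW : ∀ w ∈ W, w ∈ dom L α) (hα : α ∈ ι.fieldRange)
    (hg : L.g₂ ∈ ι.fieldRange) (hR : ∀ w ∈ W, Rat L ι.fieldRange w ∧ Rat L ι.fieldRange (α * w)) :
    ∃ (c : ℕ) (r H : ℝ), 1 ≤ c ∧ 0 < r ∧ r ≤ 1 ∧ 1 ≤ H ∧ ∀ w ∈ W, ∀ (n : ℕ) (b : Fin n × Fin n),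
      Jet ι c r H w (2 * n) (mono L α b) := by
  classical
  have hR' : ∀ w ∈ W, (L.weierstrassP w ∈ ι.fieldRange ∧ L.derivWeierstrassP w ∈ ι.fieldRange) ∧
      L.weierstrassP (α * w) ∈ ι.fieldRange ∧ L.derivWeierstrassP (α * w) ∈ ι.fieldRange :=
    fun w hw ↦ ⟨(hR w hw).1.resolve_left (hW w hw).1, (hR w hw).2.resolve_left (hW w hw).2⟩
  have hg2 : L.g₂ / 2 ∈ ι.fieldRange := div_mem hg (ofNat_mem _ 2)
  obtain ⟨c, hc1, hc⟩ := exists_common_denominator ι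
    ({1, α ^ 2, L.g₂ / 2, α ^ 2 * (L.g₂ / 2)} ∪ (W.image L.weierstrassP ∪
      W.image L.derivWeierstrassP ∪ W.image (fun w ↦ L.weierstrassP (α * w)) ∪
      W.image (fun w ↦ α * L.derivWeierstrassP (α * w)))) (by
        intro x hx
        simp only [Finset.mem_union, Finset.mem_insert, Finset.mem_singleton,
          Finset.mem_image] at hx
        rcases hx with (rfl | rfl | rfl | rfl) | ((⟨w, hw, rfl⟩ | ⟨w, hw, rfl⟩) | ⟨w, hw, rfl⟩) |
          ⟨w, hw, rfl⟩
        · exact one_mem _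
        · exact pow_mem hα 2
        · exact hg2
        · exact mul_mem (pow_mem hα 2) hg2
        · exact (hR' w hw).1.1
        · exact (hR' w hw).1.2
        · exact (hR' w hw).2.1
        · exact mul_mem hα (hR' w hw).2.2)
  have hev : ∀ᶠ A : ℝ in atTop, ∀ w ∈ W, Jet ι c (1 / (2 * A)) (2 * A) w 1 L.weierstrassP ∧
      Jet ι c (1 / (2 * A)) (2 * A) w 1 (fun z ↦ L.weierstrassP (α * z)) := by
    refine (eventually_all_finset W).2 fun w hw ↦ ?_
    have hd := hW w hw
    have m1 := Finset.mem_image_of_mem L.weierstrassP hw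
    have m2 := Finset.mem_image_of_mem L.derivWeierstrassP hw
    have m3 := Finset.mem_image_of_mem (fun w ↦ L.weierstrassP (α * w)) hw
    have m4 := Finset.mem_image_of_mem (fun w ↦ α * L.derivWeierstrassP (α * w)) hw
    refine (Jet.of_ode_eventually (analyticAt_wp L hd.1) (deriv_deriv_wp L hd.1)
      (hc _ (by simp only [Finset.mem_union]; tauto)) ?_ (hc _ (by simp)) (hc _ (by simp))).and
      (Jet.of_ode_eventually (analyticAt_wp_mul hd.2) (deriv_deriv_wp_mul L hd.2)
      (hc _ (by simp only [Finset.mem_union]; tauto)) ?_ (hc _ (by simp)) (hc _ (by simp)))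
    · rw [(hasDerivAt_wp L hd.1).deriv]
      exact hc _ (by simp only [Finset.mem_union]; tauto)
    · rw [(hasDerivAt_wp_mul L hd.2).deriv]
      exact hc _ (by simp only [Finset.mem_union]; tauto)
  obtain ⟨A, hA, hA1, hAc⟩ := (hev.and ((eventually_ge_atTop (1:ℝ)).and
    (eventually_ge_atTop (c:ℝ)))).exists
  have hr : 0 ≤ 1 / (2 * A) := by positivity
  have hH : 1 ≤ 2 * A := by linarith
  have hcH : (c:ℝ) ≤ 2 * A := by linarith
  refine ⟨c, 1 / (2 * A), 2 * A, hc1, by positivity, ?_, hH, fun w hw n b ↦ ?_⟩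
  · rw [div_le_one (by positivity)]; exact hH
  have key : ∀ f, Jet ι c (1 / (2 * A)) (2 * A) w 1 f → ∀ i : Fin n,
      Jet ι c (1 / (2 * A)) (2 * A) w n (fun z ↦ f z ^ (i : ℕ)) := by
    intro f hf i
    have := (hf.pow hr hH hcH i).mul hr (Jet.one hH hcH (n - i))
    simpa [Nat.add_sub_cancel' i.2.le] using this
  rw [two_mul n]
  exact (key _ (hA w hw).1 b.1).mul hr (key _ (hA w hw).2 b.2)

variable {L} in
lemma iteratedDeriv_sum_mono {α w : ℂ} (hw : w ∈ dom L α) {n : ℕ} (x : Fin n × Fin n → ℂ) (k : ℕ) :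
    iteratedDeriv k (fun z ↦ ∑ b, x b * mono L α b z) w =
      ∑ b, x b * iteratedDeriv k (mono L α b) w := by
  rw [iteratedDeriv_fun_sum (f := fun b z ↦ x b * mono L α b z) fun b _ ↦
    (analyticAt_const.mul (analyticAt_mono hw b)).contDiffAt]
  simp only [iteratedDeriv_const_mul_field]

/-- Construction of the auxiliary function `∑ x_b ℘(z)^i ℘(αz)^j`, and of the first nonzero
derivative `F^(s)(w₀)` among its derivatives at points of `W`. -/
lemma exists_auxiliary {α : ℂ} (hαk : α ∉ endQ L.ω₁ L.ω₂) (W : Finset ℂ) (hWne : W.Nonempty)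
    (hW : ∀ w ∈ W, w ∈ dom L α) (hα : α ∈ ι.fieldRange) (hg : L.g₂ ∈ ι.fieldRange)
    (hR : ∀ w ∈ W, Rat L ι.fieldRange w ∧ Rat L ι.fieldRange (α * w)) :
    ∃ (c : ℕ) (ρ H c₁ : ℝ), 1 ≤ c ∧ 1 ≤ ρ ∧ 1 ≤ H ∧ 1 ≤ c₁ ∧ ∀ t n T : ℕ, 1 ≤ t →
      n = 2 * W.card * t → T = n * t → ∃ (x : Fin n × Fin n → ℂ) (s : ℕ) (w₀ : ℂ) (y : 𝓞 K),
      T ≤ s ∧ w₀ ∈ W ∧ y ≠ 0 ∧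
      (∀ b, ‖x b‖ ≤ c₁ * n ^ 2 * (T.factorial * ρ ^ T * H ^ (2 * n))) ∧
      (∀ w ∈ W, ∀ k < s, iteratedDeriv k (fun z ↦ ∑ b, x b * mono L α b z) w = 0) ∧
      (c : ℂ) ^ (s + 2 * n) * iteratedDeriv s (fun z ↦ ∑ b, x b * mono L α b z) w₀ = ι y ∧
      house (y : K) ≤ n ^ 2 * (c₁ * n ^ 2 * (T.factorial * ρ ^ T * H ^ (2 * n)) *
        (s.factorial * ρ ^ s * H ^ (2 * n))) := by
  classical
  obtain ⟨c, r, H, hc, hr, hr1, hH, hjet⟩ := exists_jets ι L α W hW hα hg hR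
  obtain ⟨c₁, hc₁, hsieg⟩ := siegel K
  have hρ : 1 ≤ r⁻¹ := (one_le_inv₀ hr).2 hr1
  have hcard : 1 ≤ W.card := hWne.card_pos
  refine ⟨c, r⁻¹, H, c₁, hc, hρ, hH, hc₁, fun t n T ht hn hT ↦ ?_⟩
  set A := (T.factorial : ℝ) * r⁻¹ ^ T * H ^ (2 * n) with hA
  have hA1 : 1 ≤ A := by
    have : (1:ℝ) ≤ T.factorial := by exact_mod_cast T.factorial_pos
    exact one_le_mul_of_one_le_of_one_le (one_le_mul_of_one_le_of_one_le this (one_le_pow₀ hρ))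
      (one_le_pow₀ hH)
  have hB : ∀ (b : Fin n × Fin n) (w : ℂ), ∃ β : ℕ → 𝓞 K, w ∈ W →
      (∀ k, (c : ℂ) ^ (k + 2 * n) * iteratedDeriv k (mono L α b) w = ι (β k)) ∧
      ∀ k, house (β k : K) ≤ k.factorial * r⁻¹ ^ k * H ^ (2 * n) := by
    intro b w
    by_cases hw : w ∈ W
    · obtain ⟨β, hβ⟩ := (hjet w hw n b).house_le hr
      exact ⟨β, fun _ ↦ hβ⟩
    · exact ⟨0, fun h ↦ absurd h hw⟩
  choose β hβ using hB
  have hn1 : 1 ≤ n := hn ▸ Nat.mul_pos (by omega) ht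
  have hT1 : 1 ≤ T := hT ▸ Nat.mul_pos hn1 ht
  obtain ⟨ξ, hξ0, hξ, hξb⟩ := hsieg (W × Fin T) (Fin n × Fin n) (fun i j ↦ β j i.1 i.2) A
    (by simp only [Fintype.card_prod, Fintype.card_coe, Fintype.card_fin]; positivity)
    (by simp only [Fintype.card_prod, Fintype.card_coe, Fintype.card_fin]; rw [hT, hn]; ring)
    hA1 (fun i j ↦ by
      refine ((hβ j i.1 i.1.2).2 i.2).trans ?_
      have : (i.2 : ℕ) ≤ T := i.2.2.le
      have := Nat.factorial_le this
      rw [hA]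
      gcongr)
  have hcn : (Fintype.card (Fin n × Fin n) : ℝ) = n ^ 2 := by simp [sq]
  rw [hcn] at hξb
  set x : Fin n × Fin n → ℂ := fun b ↦ ι (ξ b) with hx
  set F : ℂ → ℂ := fun z ↦ ∑ b, x b * mono L α b z with hF
  have hder : ∀ w ∈ W, ∀ k, (c : ℂ) ^ (k + 2 * n) * iteratedDeriv k F w =
      ι ((∑ b, ξ b * β b w k : 𝓞 K) : K) := by
    intro w hw k
    rw [hF, iteratedDeriv_sum_mono (hW w hw), Finset.mul_sum]
    push_cast
    rw [map_sum]
    refine Finset.sum_congr rfl fun b _ ↦ ?_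
    rw [map_mul, ← (hβ b w hw).1, hx]; ring
  have hc0 : (c : ℂ) ≠ 0 := by exact_mod_cast (by omega : c ≠ 0)
  have hx0 : x ≠ 0 := by
    obtain ⟨b, hb⟩ := Function.ne_iff.1 hξ0
    refine Function.ne_iff.2 ⟨b, ?_⟩
    simpa [hx] using hb
  -- not all derivatives vanish, since the function is not identically zero
  have hex : ∃ s, ∃ w ∈ W, iteratedDeriv s F w ≠ 0 := by
    by_contra! hcon
    obtain ⟨w, hw⟩ := hWne
    refine analyticOrderAt_ne_top L hαk x hx0 (hW w hw) (ENat.eq_top_iff_forall_ge.2 fun m ↦ ?_)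
    exact (natCast_le_analyticOrderAt_iff_iteratedDeriv_eq_zero (analyticAt_sum (hW w hw) x)).2
      fun k _ ↦ hcon k w hw
  obtain ⟨w₀, hw₀, hne⟩ := Nat.find_spec hex
  have hmin : ∀ w ∈ W, ∀ k < Nat.find hex, iteratedDeriv k F w = 0 := by
    intro w hw k hk
    by_contra h
    exact Nat.find_min hex hk ⟨w, hw, h⟩
  set s := Nat.find hex with hs
  refine ⟨x, s, w₀, ∑ b, ξ b * β b w₀ s, ?_, hw₀, ?_, fun b ↦ ?_, hmin, hder w₀ hw₀ s, ?_⟩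
  · by_contra! hlt
    have h1 := congrFun hξ (⟨w₀, hw₀⟩, ⟨s, hlt⟩)
    have h2 := hder w₀ hw₀ s
    have h3 : ∑ b, ξ b * β b w₀ s = 0 := by
      rw [← Pi.zero_apply (M := fun _ ↦ 𝓞 K), ← h1]
      simp [Matrix.mulVec, dotProduct, mul_comm]
    rw [h3] at h2
    simp [hc0, hne] at h2
  · intro h0
    have h2 := hder w₀ hw₀ s
    rw [h0] at h2
    simp [hc0, hne] at h2
  · exact (norm_embedding_le_house _ _).trans (hξb b)
  · push_cast
    refine (house_sum_le_sum_house _ _).trans ?_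
    have : ∀ b ∈ (Finset.univ : Finset (Fin n × Fin n)), house ((ξ b : K) * (β b w₀ s : K)) ≤
        c₁ * n ^ 2 * A * (s.factorial * r⁻¹ ^ s * H ^ (2 * n)) := fun b _ ↦
      (house_mul_le _ _).trans (mul_le_mul (hξb b) ((hβ b w₀ hw₀).2 s) (house_nonneg _)
        (by positivity))
    refine (Finset.sum_le_card_nsmul _ _ _ this).trans_eq ?_
    rw [nsmul_eq_mul, Finset.card_univ, hcn]

/-- The transcendence argument: `12[K:ℚ] + 6` points at which `℘(z)` and `℘(αz)` take values in
a number field `K` are impossible. -/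
theorem core {α : ℂ} (hαk : α ∉ endQ L.ω₁ L.ω₂) (W : Finset ℂ)
    (hcard : W.card = 12 * Module.finrank ℚ K + 6)
    (hW : ∀ w ∈ W, w ∈ dom L α) (hα : α ∈ ι.fieldRange) (hg : L.g₂ ∈ ι.fieldRange)
    (hR : ∀ w ∈ W, Rat L ι.fieldRange w ∧ Rat L ι.fieldRange (α * w)) : False := by
  obtain ⟨c, ρ, H, c₁, hc, hρ, hH, hc₁, haux⟩ := exists_auxiliary ι L hαk W
    (Finset.card_pos.1 (by omega)) hW hα hg hR
  set M := W.card with hM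
  obtain ⟨C, hC, hext⟩ := extrapolation L α W hW (2 * M) (by positivity)
  set d := Module.finrank ℚ K with hd
  have hd1 : 1 ≤ d := Module.finrank_pos
  have hcR : (1:ℝ) ≤ c := by exact_mod_cast hc
  set D := Real.log c₁ + 2 * M + Real.log ρ + 2 * Real.log H with hD
  set E := 3 * Real.log c + D + C + (d - 1 : ℕ) * (2 * D) with hE
  have l1 := Real.log_nonneg hρ
  have l2 := Real.log_nonneg hH
  have l3 := Real.log_nonneg hc₁
  have l4 := Real.log_nonneg hcR
  -- with `n = 2Mt` and `T = nt` there are `n² = 2MT` unknowns for `MT` equations, and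
  -- `n² = O(s)` for all `s ≥ T`
  obtain ⟨t, ht⟩ := exists_nat_gt (Real.exp E)
  have ht1 : 1 ≤ t := by
    have := (Real.exp_pos E).trans ht
    exact_mod_cast this
  obtain ⟨n, hn⟩ : ∃ n, n = 2 * M * t := ⟨_, rfl⟩
  obtain ⟨T, hT⟩ : ∃ T, T = n * t := ⟨_, rfl⟩
  obtain ⟨x, s, w₀, y, hTs, hw₀, hy0, hxb, hvan, hy, hyH⟩ := haux t n T ht1 hn hT
  have hn1 : 1 ≤ n := hn ▸ Nat.mul_pos (by omega) ht1
  have hnT : n ≤ T := hT ▸ Nat.le_mul_of_pos_right n ht1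
  have htT : t ≤ T := hT ▸ Nat.le_mul_of_pos_left t hn1
  have hs1 : 1 ≤ s := by omega
  have hs0 : (0:ℝ) < s := by exact_mod_cast hs1
  have hs1R : (1:ℝ) ≤ s := by exact_mod_cast hs1
  set ℓ := Real.log s with hℓ
  have hexpℓ : Real.exp ℓ = s := Real.exp_log hs0
  have hn2 : (n:ℝ) ^ 2 ≤ 2 * M * s := by
    have h1 : n ^ 2 = 2 * M * T := by rw [hT, hn]; ring
    have h2 : n ^ 2 ≤ 2 * M * s := h1 ▸ Nat.mul_le_mul_left _ hTs
    exact_mod_cast h2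
  have pw : ∀ a : ℝ, 1 ≤ a → ∀ k m : ℕ, k ≤ m * s → a ^ k ≤ Real.exp (m * Real.log a * s) := by
    intro a ha k m hk
    refine (pow_le_pow_right₀ ha hk).trans_eq ?_
    rw [← Real.exp_log (pow_pos (by linarith : 0 < a) (m * s)), Real.log_pow]
    congr 1; push_cast; ring
  have fac : ∀ k ≤ s, (k.factorial : ℝ) ≤ Real.exp (s * ℓ) := by
    intro k hk
    rw [Real.exp_nat_mul, hexpℓ]
    exact_mod_cast (Nat.factorial_le hk).trans (Nat.factorial_le_pow s)
  have e1 : c₁ ≤ Real.exp (Real.log c₁ * s) := by simpa using pw c₁ hc₁ 1 1 (by omega)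
  have e2 : (n:ℝ) ^ 2 ≤ Real.exp (2 * M * s) := by linarith [Real.add_one_le_exp (2 * M * s : ℝ)]
  have e3 : H ^ (2 * n) ≤ Real.exp (2 * Real.log H * s) := by
    simpa using pw H hH (2 * n) 2 (by omega)
  have e4 : ∀ k ≤ s, ρ ^ k ≤ Real.exp (Real.log ρ * s) := fun k hk ↦ by
    simpa using pw ρ hρ k 1 (by omega)
  have e5 : (c:ℝ) ^ (s + 2 * n) ≤ Real.exp (3 * Real.log c * s) := by
    simpa using pw c hcR (s + 2 * n) 3 (by omega)
  set X := c₁ * (n:ℝ) ^ 2 * (T.factorial * ρ ^ T * H ^ (2 * n)) with hX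
  have hX0 : 0 ≤ X := by positivity
  have hXe : X ≤ Real.exp (s * ℓ + D * s) := by
    calc X ≤ Real.exp (Real.log c₁ * s) * Real.exp (2 * M * s) * (Real.exp (s * ℓ) *
          Real.exp (Real.log ρ * s) * Real.exp (2 * Real.log H * s)) := by
          rw [hX]
          gcongr
          exacts [fac T hTs, e4 T hTs]
      _ = _ := by
          simp only [← Real.exp_add]
          congr 1; rw [hD]; ring
  have hYe : house (y : K) ≤ Real.exp (2 * s * ℓ + 2 * D * s) := by
    refine hyH.trans ?_
    calc _ ≤ Real.exp (2 * M * s) * (Real.exp (s * ℓ + D * s) * (Real.exp (s * ℓ) *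
          Real.exp (Real.log ρ * s) * Real.exp (2 * Real.log H * s))) := by
          gcongr
          exacts [fac s le_rfl, e4 s le_rfl]
      _ ≤ _ := by
          simp only [← Real.exp_add]
          refine Real.exp_le_exp.2 ?_
          rw [hD]
          nlinarith [mul_nonneg l3 hs0.le]
  have hsmall := hext n s x X hX0 hs1 (by exact_mod_cast hn2) hxb hvan w₀ hw₀
  have hιy : ‖ι y‖ ≤ Real.exp (3 * Real.log c * s) * (Real.exp (s * ℓ + D * s) *
      Real.exp (C * s + s * ℓ - M / 6 * (s * ℓ))) := by
    rw [← hy, norm_mul, norm_pow, Complex.norm_natCast]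
    gcongr
    refine hsmall.trans ?_
    gcongr
  have hlio := liouville ι y hy0
  have hfinal : (1:ℝ) ≤ Real.exp (3 * Real.log c * s) * (Real.exp (s * ℓ + D * s) *
      Real.exp (C * s + s * ℓ - M / 6 * (s * ℓ))) * Real.exp (2 * s * ℓ + 2 * D * s) ^ (d - 1) := by
    refine hlio.trans ?_
    have := house_nonneg (y : K)
    gcongr
  rw [← Real.exp_nat_mul] at hfinal
  simp only [← Real.exp_add] at hfinal
  have hexp := Real.one_le_exp_iff.1 hfinal
  -- the coefficient of `s log s` in the exponent is `2 - M / 6 + 2 (d - 1) = -1`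
  have hMd : (M:ℝ) / 6 = 2 * d + 1 := by rw [hcard]; push_cast; ring
  have hd' : ((d - 1 : ℕ) : ℝ) = d - 1 := by push_cast [Nat.cast_sub hd1]; ring
  have hle : 0 ≤ s * (E - ℓ) := by
    refine hexp.trans_eq ?_
    rw [hE, hMd, hd']; ring
  have hEℓ : ℓ ≤ E := by
    have := nonneg_of_mul_nonneg_right hle hs0
    linarith
  have : (s:ℝ) ≤ Real.exp E := by rw [← hexpℓ]; exact Real.exp_le_exp.2 hEℓ
  have hts : (t:ℝ) ≤ s := by exact_mod_cast htT.trans hTs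
  linarith

end Core

/-! ### Multiples of `p` as interpolation points -/

section Final

/-- For `u ∉ Λ` some progression `(1 + Nℕ) u` avoids `Λ`: take for `N` a positive integer with
`N u ∈ Λ` if there is one, and `N = 1` otherwise. -/
lemma exists_avoid (L : PeriodPair) {u : ℂ} (hu : u ∉ L.lattice) :
    ∃ N : ℕ, 1 ≤ N ∧ ∀ m : ℕ, N ∣ m → ((m + 1 : ℕ) : ℂ) * u ∉ L.lattice := by
  by_cases h : ∃ N : ℕ, 1 ≤ N ∧ (N : ℂ) * u ∈ L.lattice
  · obtain ⟨N, hN, hNu⟩ := h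
    refine ⟨N, hN, ?_⟩
    rintro _ ⟨k, rfl⟩ hmem
    have h1 := L.lattice.smul_mem (k : ℤ) hNu
    refine hu ?_
    have h2 := sub_mem hmem h1
    convert h2 using 1
    push_cast; rw [zsmul_eq_mul]; push_cast; ring
  · push Not at h
    exact ⟨1, le_rfl, fun m _ ↦ h (m + 1) (by omega)⟩

/-- The theorem for Mathlib's `℘`. The points `w` are the multiples `(N j + 1) p`, which, like their
products with `α`, are off the lattice and rational over the field generated by the data. -/
theorem main (L : PeriodPair) (α p : ℂ) (hα : α ∉ endQ L.ω₁ L.ω₂) (hp : p ∉ L.lattice)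
    (hαp : α * p ∉ L.lattice) (a1 : IsAlgebraic ℚ α) (a2 : IsAlgebraic ℚ L.g₂)
    (a3 : IsAlgebraic ℚ L.g₃) (a4 : IsAlgebraic ℚ (L.weierstrassP p))
    (a5 : IsAlgebraic ℚ (L.weierstrassP (α * p))) : False := by
  classical
  have halg : ∀ z ∉ L.lattice, IsAlgebraic ℚ (L.weierstrassP z) →
      IsAlgebraic ℚ (L.derivWeierstrassP z) := by
    intro z hz h
    refine IsAlgebraic.of_pow two_pos ?_
    rw [L.derivWeierstrassP_sq z hz]
    have h4 : IsAlgebraic ℚ (4 : ℂ) := by simpa using isAlgebraic_algebraMap (R := ℚ) (A := ℂ) 4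
    exact ((h4.mul (h.pow 3)).sub (a2.mul h)).sub a3
  set S : Set ℂ := {α, L.g₂, L.weierstrassP p, L.derivWeierstrassP p, L.weierstrassP (α * p),
    L.derivWeierstrassP (α * p)} with hS
  have hSi : ∀ x ∈ S, IsIntegral ℚ x := by
    intro x hx
    simp only [hS, Set.mem_insert_iff, Set.mem_singleton_iff] at hx
    rcases hx with rfl | rfl | rfl | rfl | rfl | rfl
    exacts [a1.isIntegral, a2.isIntegral, a4.isIntegral, (halg _ hp a4).isIntegral, a5.isIntegral,
      (halg _ hαp a5).isIntegral]
  have hfin : Finite S := by rw [hS]; exact Set.Finite.to_subtype (by simp)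
  have : FiniteDimensional ℚ (IntermediateField.adjoin ℚ S) :=
    IntermediateField.finiteDimensional_adjoin hSi
  have : NumberField (IntermediateField.adjoin ℚ S) := ⟨⟩
  set K := IntermediateField.adjoin ℚ S
  set ι : K →+* ℂ := algebraMap K ℂ
  have hmem : ∀ x ∈ S, x ∈ ι.fieldRange := fun x hx ↦
    ⟨⟨x, IntermediateField.subset_adjoin ℚ S hx⟩, rfl⟩
  have hg : L.g₂ ∈ ι.fieldRange := hmem _ (by simp [hS])
  have hRp : Rat L ι.fieldRange p := Or.inr ⟨hmem _ (by simp [hS]), hmem _ (by simp [hS])⟩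
  have hRq : Rat L ι.fieldRange (α * p) := Or.inr ⟨hmem _ (by simp [hS]), hmem _ (by simp [hS])⟩
  obtain ⟨N₁, h1, hN₁⟩ := exists_avoid L hp
  obtain ⟨N₂, h2, hN₂⟩ := exists_avoid L hαp
  have hp0 : p ≠ 0 := by rintro rfl; exact hp (zero_mem _)
  have hN : N₁ * N₂ ≠ 0 := by positivity
  set φ : ℕ → ℂ := fun j ↦ ((N₁ * N₂ * j + 1 : ℕ) : ℂ) * p with hφ
  have hinj : Function.Injective φ := by
    intro i j hij
    have := Nat.cast_injective (mul_right_cancel₀ hp0 hij)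
    exact Nat.eq_of_mul_eq_mul_left (Nat.pos_of_ne_zero hN) (Nat.succ_injective this)
  have hφα : ∀ j, α * φ j = ((N₁ * N₂ * j + 1 : ℕ) : ℂ) * (α * p) := fun j ↦ by
    rw [hφ]; ring
  refine core ι L hα ((Finset.range (12 * Module.finrank ℚ K + 6)).image φ) ?_ ?_
    (hmem _ (by simp [hS])) hg ?_
  · rw [Finset.card_image_of_injective _ hinj, Finset.card_range]
  · intro w hw
    obtain ⟨j, -, rfl⟩ := Finset.mem_image.1 hw
    refine ⟨hN₁ _ ⟨N₂ * j, by ring⟩, ?_⟩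
    rw [hφα]
    exact hN₂ _ ⟨N₁ * j, by ring⟩
  · intro w hw
    obtain ⟨j, -, rfl⟩ := Finset.mem_image.1 hw
    refine ⟨hRp.nsmul hg _, ?_⟩
    rw [hφα]
    exact hRq.nsmul hg _

end Final

end Schneider

/-- **Schneider's theorem (third form).** If `Ω` is a lattice in `ℂ` with field of
endomorphisms `k`, and `α`, `p` are complex numbers with `α ∉ k`, `p ∉ Ω` and `αp ∉ Ω`, then
at least one of the five numbers `α`, `g₂`, `g₃`, `℘(p)`, `℘(αp)` is transcendental over `ℚ`. -/
theorem schneider_three (ω₁ ω₂ : ℂ) (hΩ : IsLatticeBasis ω₁ ω₂)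
    (α p : ℂ) (hα : α ∉ endQ ω₁ ω₂) (hp : p ∉ LatticePts ω₁ ω₂)
    (hαp : α * p ∉ LatticePts ω₁ ω₂) :
    Transcendental ℚ α ∨ Transcendental ℚ (g2 ω₁ ω₂) ∨ Transcendental ℚ (g3 ω₁ ω₂) ∨
      Transcendental ℚ (wP ω₁ ω₂ p) ∨ Transcendental ℚ (wP ω₁ ω₂ (α * p)) := by
  by_contra! h
  simp only [Transcendental, not_not] at h
  obtain ⟨a1, a2, a3, a4, a5⟩ := h
  let L : PeriodPair := ⟨ω₁, ω₂, hΩ⟩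
  have hlat : LatticePts ω₁ ω₂ = (L.lattice : Set ℂ) := Schneider.coe_lattice L
  rw [hlat] at hp hαp
  rw [show g2 ω₁ ω₂ = L.g₂ from Schneider.g2_eq L] at a2
  rw [show g3 ω₁ ω₂ = L.g₃ from Schneider.g3_eq L] at a3
  rw [show wP ω₁ ω₂ p = _ from Schneider.wP_eq L hp] at a4
  rw [show wP ω₁ ω₂ (α * p) = _ from Schneider.wP_eq L hαp] at a5
  exact Schneider.main L α p hα hp hαp a1 a2 a3 a4 a5
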